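/- arXiv:2103.09407 — 9 statements merged into one kernel-verified Lean document; each statement's English description precedes it below -/
import Mathlib

section
/- For any matrices A ∈ ℝ^{n×n}, B ∈ ℝ^{n×m} and F ∈ ℝ^{m×n}, the spectral radius of the (n+m)×(n+m) block matrix A_F = [[A, B], [FA, FB]] equals the spectral radius of A + BF, i.e. ρ(A_F) = ρ(A + BF). -/
open Matrix MeasureTheory Filter
open scoped ENNReal

/-- Spectral radius of a real square matrix: the maximum modulus of its complex
eigenvalues, expressed via the spectral radius of its complexification. -/
noncomputable def specRad {ι : Type*} [Fintype ι] [DecidableEq ι]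
    (M : Matrix ι ι ℝ) : ℝ≥0∞ :=
  spectralRadius ℂ (M.map Complex.ofReal)

/-- The block matrix `A_F = [[A, B], [FA, FB]]`. -/
noncomputable def blockAF {n m : ℕ} (A : Matrix (Fin n) (Fin n) ℝ)
    (B : Matrix (Fin n) (Fin m) ℝ) (F : Matrix (Fin m) (Fin n) ℝ) :
    Matrix (Fin n ⊕ Fin m) (Fin n ⊕ Fin m) ℝ :=
  Matrix.fromBlocks A B (F * A) (F * B)

/-- The block column matrix `F̄ = [I_n; F]`. -/
noncomputable def extendF {n m : ℕ} (F : Matrix (Fin m) (Fin n) ℝ) :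
    Matrix (Fin n ⊕ Fin m) (Fin n) ℝ :=
  Matrix.fromRows (1 : Matrix (Fin n) (Fin n) ℝ) F

/-- The block diagonal matrix `Λ = diag(Q, R)`. -/
noncomputable def blockLam {n m : ℕ} (Q : Matrix (Fin n) (Fin n) ℝ)
    (R : Matrix (Fin m) (Fin m) ℝ) :
    Matrix (Fin n ⊕ Fin m) (Fin n ⊕ Fin m) ℝ :=
  Matrix.fromBlocks Q 0 0 R

/-- The LQR gain `F = -γ (R + γ B' X B)⁻¹ B' X A` associated with `X`. -/
noncomputable def gainF {n m : ℕ} (A : Matrix (Fin n) (Fin n) ℝ)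
    (B : Matrix (Fin n) (Fin m) ℝ) (R : Matrix (Fin m) (Fin m) ℝ)
    (γ : ℝ) (X : Matrix (Fin n) (Fin n) ℝ) : Matrix (Fin m) (Fin n) ℝ :=
  -(γ • ((R + γ • (Bᵀ * X * B))⁻¹ * (Bᵀ * X * A)))

/-- `P = [[Q + γA'XA, γA'XB], [γB'XA, R + γB'XB]]`. -/
noncomputable def Pmat {n m : ℕ} (A : Matrix (Fin n) (Fin n) ℝ)
    (B : Matrix (Fin n) (Fin m) ℝ) (Q : Matrix (Fin n) (Fin n) ℝ)
    (R : Matrix (Fin m) (Fin m) ℝ) (γ : ℝ) (X : Matrix (Fin n) (Fin n) ℝ) :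
    Matrix (Fin n ⊕ Fin m) (Fin n ⊕ Fin m) ℝ :=
  Matrix.fromBlocks (Q + γ • (Aᵀ * X * A)) (γ • (Aᵀ * X * B))
    (γ • (Bᵀ * X * A)) (R + γ • (Bᵀ * X * B))

/-- `X` solves the discounted algebraic Riccati equation
`X = Q + γA'XA − γ²A'XB(R + γB'XB)⁻¹B'XA`. -/
def IsAREsol {n m : ℕ} (A : Matrix (Fin n) (Fin n) ℝ)
    (B : Matrix (Fin n) (Fin m) ℝ) (Q : Matrix (Fin n) (Fin n) ℝ)
    (R : Matrix (Fin m) (Fin m) ℝ) (γ : ℝ) (X : Matrix (Fin n) (Fin n) ℝ) : Prop :=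
  X = Q + γ • (Aᵀ * X * A)
    - (γ ^ 2) • (Aᵀ * X * B * (R + γ • (Bᵀ * X * B))⁻¹ * (Bᵀ * X * A))

theorem spectralRadius_le_aux {R S : Type*} [Ring R] [Algebra ℂ R] [Ring S] [Algebra ℂ S]
    (a : R) (b : S) (h : ∀ k : ℂ, k ≠ 0 → k ∈ spectrum ℂ a → k ∈ spectrum ℂ b) :
    spectralRadius ℂ a ≤ spectralRadius ℂ b := by
  unfold spectralRadius
  refine iSup₂_le fun k hk => ?_
  by_cases h0 : k = 0
  · simp [h0]
  · exact le_iSup₂_of_le k (h k h0 hk) le_rfl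

theorem mem_spectrum_mul_aux {ι κ : Type*} [Fintype ι] [DecidableEq ι] [Fintype κ]
    [DecidableEq κ] (U : Matrix ι κ ℂ) (V : Matrix κ ι ℂ) (k : ℂ) (h0 : k ≠ 0)
    (hk : k ∈ spectrum ℂ (U * V)) : k ∈ spectrum ℂ (V * U) := by
  rw [Matrix.mem_spectrum_iff_isRoot_charpoly] at hk ⊢
  have h := congrArg (Polynomial.eval k) (Matrix.charpoly_mul_comm' U V)
  rw [Polynomial.IsRoot] at hk ⊢
  simpa [hk, h0] using h.symm

theorem spectral_radius_blockAF_eq (n m : ℕ) (hn : 0 < n) (hm : 0 < m)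
    (A : Matrix (Fin n) (Fin n) ℝ) (B : Matrix (Fin n) (Fin m) ℝ)
    (F : Matrix (Fin m) (Fin n) ℝ) :
    specRad (blockAF A B F) = specRad (A + B * F) := by
  have e1 : (blockAF A B F).map Complex.ofReal
      = (extendF F).map Complex.ofRealHom * (Matrix.fromCols A B).map Complex.ofRealHom := by
    rw [← Matrix.map_mul, extendF, Matrix.fromRows_mul_fromCols]
    simp [blockAF]
    rfl
  have e2 : (A + B * F).map Complex.ofReal
      = (Matrix.fromCols A B).map Complex.ofRealHom * (extendF F).map Complex.ofRealHom := by
    rw [← Matrix.map_mul, extendF, Matrix.fromCols_mul_fromRows]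
    simp
    rfl
  unfold specRad
  rw [e1, e2]
  exact le_antisymm (spectralRadius_le_aux _ _ (mem_spectrum_mul_aux _ _))
    (spectralRadius_le_aux _ _ (mem_spectrum_mul_aux _ _))
end

section
/- Suppose ρ(A + BF) < 1. Then there exists a unique symmetric matrix S ∈ ℝ^{(n+m)×(n+m)} satisfying γ A_F S A_F' + Γ + (γ/(1−γ)) F̄ Σw F̄' = S, and this S is positive definite. -/
open Matrix MeasureTheory Filter
open scoped ENNReal

section lyapHelpers

attribute [local instance] Matrix.linftyOpNormedRing Matrix.linftyOpNormedAlgebra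

theorem aux_pow_complex {ι : Type*} [Fintype ι] [DecidableEq ι]
    (M : Matrix ι ι ℂ) (h : spectralRadius ℂ M < 1) :
    Tendsto (fun k : ℕ => M ^ k) atTop (nhds 0) := by
  have hg := spectrum.pow_nnnorm_pow_one_div_tendsto_nhds_spectralRadius M
  obtain ⟨r, hr1, hr2⟩ := exists_between h
  have hrt : r ≠ ⊤ := ne_top_of_lt hr2
  lift r to NNReal using hrt
  have hr3 : r < 1 := by exact_mod_cast hr2
  have hev := hg.eventually (gt_mem_nhds hr1)
  apply squeeze_zero_norm' (a := fun k : ℕ => (r : ℝ) ^ k)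
  · filter_upwards [hev, eventually_gt_atTop 0] with k hk hk0
    have hk' : (k : ℝ) ≠ 0 := by positivity
    have h1 : ((‖M ^ k‖₊ : ENNReal) ^ (1 / k : ℝ)) ^ (k : ℝ) ≤ (r : ENNReal) ^ (k : ℝ) :=
      ENNReal.rpow_le_rpow hk.le (by positivity)
    rw [← ENNReal.rpow_mul, one_div, inv_mul_cancel₀ hk', ENNReal.rpow_one,
      ENNReal.rpow_natCast] at h1
    exact_mod_cast h1
  · exact tendsto_pow_atTop_nhds_zero_of_lt_one r.2 (by exact_mod_cast hr3)

end lyapHelpers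

theorem aux_pow_real {ι : Type*} [Fintype ι] [DecidableEq ι]
    (M : Matrix ι ι ℝ) (h : specRad M < 1) :
    Tendsto (fun k : ℕ => M ^ k) atTop (nhds 0) := by
  have h1 := aux_pow_complex _ h
  have hc : Continuous (fun X : Matrix ι ι ℂ => X.map Complex.re) :=
    continuous_id.matrix_map Complex.continuous_re
  have h2 := (hc.tendsto 0).comp h1
  have e : ((0 : Matrix ι ι ℂ).map Complex.re) = 0 := by ext; simp
  rw [e] at h2
  refine h2.congr fun k => ?_
  have : (M.map Complex.ofReal) ^ k = (M ^ k).map Complex.ofReal :=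
    (map_pow (Complex.ofRealHom.mapMatrix (m := ι)) M k).symm
  ext i j
  simp [this]

theorem aux_lyap {ι : Type*} [Fintype ι] [DecidableEq ι]
    (P Q : Matrix ι ι ℝ) (γ : ℝ) (hγ0 : 0 < γ) (hγ1 : γ < 1) (hQ : Q.PosDef)
    (hP : Tendsto (fun k : ℕ => P ^ k) atTop (nhds 0)) :
    ∃ S : Matrix ι ι ℝ, S.IsSymm ∧ γ • (P * S * Pᵀ) + Q = S ∧ S.PosDef ∧
      ∀ S' : Matrix ι ι ℝ, γ • (P * S' * Pᵀ) + Q = S' → S' = S := by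
  let L : Matrix ι ι ℝ →ₗ[ℝ] Matrix ι ι ℝ :=
    { toFun := fun S => γ • (P * S * Pᵀ)
      map_add' := fun X Y => by simp [mul_add, add_mul]
      map_smul' := fun c X => by simp [smul_comm γ c] }
  have hL : ∀ X, L X = γ • (P * X * Pᵀ) := fun X => rfl
  have hLk : ∀ (k : ℕ) X, (L ^ k) X = γ ^ k • (P ^ k * X * (P ^ k)ᵀ) := by
    intro k X
    induction k with
    | zero => simp
    | succ k ih =>
      rw [pow_succ', Module.End.mul_apply, ih, hL, pow_succ' P, pow_succ' γ]
      simp [Matrix.transpose_mul, mul_assoc, smul_smul]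
  have hT : ∀ X, Tendsto (fun k : ℕ => (L ^ k) X) atTop (nhds 0) := by
    intro X
    have hc : Continuous (fun Y : Matrix ι ι ℝ => Y * X * Yᵀ) := by fun_prop
    have h1 := (hc.tendsto 0).comp hP
    have h2 := (tendsto_pow_atTop_nhds_zero_of_lt_one hγ0.le hγ1).smul h1
    simp only [zero_smul] at h2
    exact h2.congr fun k => (hLk k X).symm
  have hfix : ∀ D, L D = D → D = 0 := by
    intro D hD
    have : ∀ k : ℕ, (L ^ k) D = D := by
      intro k
      induction k with
      | zero => simp
      | succ k ih => rw [pow_succ', Module.End.mul_apply, ih, hD]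
    exact tendsto_nhds_unique ((tendsto_const_nhds (x := D) (f := atTop)).congr
      fun k => (this k).symm) (hT D)
  have hinj : Function.Injective (LinearMap.id - L : Matrix ι ι ℝ →ₗ[ℝ] Matrix ι ι ℝ) := by
    rw [injective_iff_map_eq_zero]
    intro D hD
    exact hfix D (sub_eq_zero.mp hD).symm
  obtain ⟨S, hS⟩ := (LinearMap.injective_iff_surjective.mp hinj) Q
  have hS1 : L S + Q = S := by rw [← hS]; simp
  have huniq : ∀ S', L S' + Q = S' → S' = S := by
    intro S' h'
    apply hinj
    rw [hS, LinearMap.sub_apply, LinearMap.id_apply, sub_eq_iff_eq_add, add_comm]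
    exact h'.symm
  have hsym : Sᵀ = S := by
    apply huniq
    have hQs : Qᵀ = Q := by simpa using hQ.isHermitian.eq
    have := congrArg Matrix.transpose hS1
    rw [Matrix.transpose_add, hQs, hL, Matrix.transpose_smul, Matrix.transpose_mul,
      Matrix.transpose_mul, Matrix.transpose_transpose, ← mul_assoc] at this
    exact this
  refine ⟨S, hsym, hS1, ?_, huniq⟩
  -- lower bound
  have hpsd : ∀ k : ℕ, ((L ^ k) Q).PosSemidef := by
    intro k
    rw [hLk]
    have := hQ.posSemidef.mul_mul_conjTranspose_same (P ^ k)
    rw [Matrix.conjTranspose_eq_transpose_of_trivial] at this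
    exact this.smul (by positivity)
  have hstep : ∀ k : ℕ, (S - Q - (L ^ (k + 1)) S).PosSemidef := by
    intro k
    induction k with
    | zero =>
      have : S - Q - (L ^ (0 + 1)) S = 0 := by
        nth_rewrite 1 [← hS1]; simp
      rw [this]; exact Matrix.PosSemidef.zero
    | succ k ih =>
      have : S - Q - (L ^ (k + 1 + 1)) S = (S - Q - (L ^ (k + 1)) S) + (L ^ (k + 1)) Q := by
        have : (L ^ (k + 1)) S = (L ^ (k + 1 + 1)) S + (L ^ (k + 1)) Q := by
          rw [pow_succ L (k + 1), Module.End.mul_apply, ← map_add, hS1]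
        rw [this]; abel
      rw [this]; exact ih.add (hpsd _)
  have hlim : (S - Q).PosSemidef := by
    refine Matrix.PosSemidef.of_dotProduct_mulVec_nonneg ?_ ?_
    · exact Matrix.IsHermitian.sub (by simpa [Matrix.IsHermitian] using hsym) hQ.isHermitian
    · intro x
      have hc : Continuous (fun Y : Matrix ι ι ℝ => star x ⬝ᵥ ((S - Q - Y) *ᵥ x)) := by fun_prop
      have h1 := (hc.tendsto 0).comp ((hT S).comp (tendsto_add_atTop_nat 1))
      simp only [sub_zero] at h1
      exact ge_of_tendsto' h1 fun k => (hstep k).dotProduct_mulVec_nonneg x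
  have := hQ.add_posSemidef hlim
  simpa using this

theorem lyapunov_unique_posdef_solution (n m : ℕ) (hn : 0 < n) (hm : 0 < m)
    (A : Matrix (Fin n) (Fin n) ℝ) (B : Matrix (Fin n) (Fin m) ℝ)
    (γ : ℝ) (hγ0 : 0 < γ) (hγ1 : γ < 1)
    (Sw : Matrix (Fin n) (Fin n) ℝ) (hSw : Sw.PosDef)
    (Γ : Matrix (Fin n ⊕ Fin m) (Fin n ⊕ Fin m) ℝ) (hΓ : Γ.PosDef)
    (F : Matrix (Fin m) (Fin n) ℝ) (hF : specRad (A + B * F) < 1) :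
    ∃ S : Matrix (Fin n ⊕ Fin m) (Fin n ⊕ Fin m) ℝ,
      S.IsSymm ∧
      γ • (blockAF A B F * S * (blockAF A B F)ᵀ) + Γ
          + (γ / (1 - γ)) • (extendF F * Sw * (extendF F)ᵀ) = S ∧
      S.PosDef ∧
      ∀ S' : Matrix (Fin n ⊕ Fin m) (Fin n ⊕ Fin m) ℝ, S'.IsSymm →
        γ • (blockAF A B F * S' * (blockAF A B F)ᵀ) + Γ
            + (γ / (1 - γ)) • (extendF F * Sw * (extendF F)ᵀ) = S' → S' = S := by
  have hEG : blockAF A B F = extendF F * Matrix.fromCols A B := by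
    simp [blockAF, extendF, Matrix.fromRows_mul_fromCols]
  have hGE : Matrix.fromCols A B * extendF F = A + B * F := by
    simp [extendF, Matrix.fromCols_mul_fromRows]
  have hpow : ∀ k : ℕ, (blockAF A B F) ^ (k + 1)
      = extendF F * (A + B * F) ^ k * Matrix.fromCols A B := by
    intro k
    induction k with
    | zero => simp [hEG]
    | succ k ih =>
      rw [pow_succ, ih, hEG, pow_succ (A + B * F), ← hGE]
      simp only [Matrix.mul_assoc]
  have hP : Tendsto (fun k : ℕ => (blockAF A B F) ^ k) atTop (nhds 0) := by
    rw [← tendsto_add_atTop_iff_nat 1]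
    have hc : Continuous (fun Y : Matrix (Fin n) (Fin n) ℝ =>
      extendF F * Y * Matrix.fromCols A B) := by fun_prop
    have h1 := (hc.tendsto 0).comp (aux_pow_real _ hF)
    simp only [Matrix.mul_zero, Matrix.zero_mul] at h1
    exact h1.congr fun k => (hpow k).symm
  have hpsd : ((γ / (1 - γ)) • (extendF F * Sw * (extendF F)ᵀ)).PosSemidef := by
    have := hSw.posSemidef.mul_mul_conjTranspose_same (extendF F)
    rw [Matrix.conjTranspose_eq_transpose_of_trivial] at this
    exact this.smul (div_nonneg hγ0.le (by linarith))
  obtain ⟨S, h1, h2, h3, h4⟩ := aux_lyap _ _ γ hγ0 hγ1 (hΓ.add_posSemidef hpsd) hP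
  refine ⟨S, h1, by rw [add_assoc]; exact h2, h3, fun S' _ h => h4 S' ?_⟩
  rw [← add_assoc]; exact h
end

section
/- Suppose F ∈ ℝ^{m×n} satisfies ρ(A + BF) < 1. Then the series S := Σ_{k=0}^{∞} γ^k [ A_F^k Γ (A_F^k)' + Σ_{j=0}^{k−1} A_F^j F̄ Σw F̄' (A_F^j)' ] converges (entrywise), and its sum is the unique symmetric positive definite solution of the Lyapunov equation γ A_F S A_F' + Γ + (γ/(1−γ)) F̄ Σw F̄' = S. -/
open Matrix MeasureTheory Filter
open scoped ENNReal

section helpers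
attribute [local instance] Matrix.linftyOpNormedAddCommGroup Matrix.linftyOpNormedRing
  Matrix.linftyOpNormedAlgebra Matrix.linftyOpNormedSpace

theorem aux_pow_bdd {ι : Type*} [Fintype ι] [DecidableEq ι]
    (K : Matrix ι ι ℝ) (hK : specRad K < 1) : ∃ C : ℝ, ∀ k : ℕ, ‖K ^ k‖ ≤ C := by
  have h := spectrum.pow_nnnorm_pow_one_div_tendsto_nhds_spectralRadius (K.map Complex.ofReal)
  have h1 := h.eventually_lt_const hK
  have hn : ∀ k : ℕ, ‖(K.map Complex.ofReal) ^ k‖₊ = ‖K ^ k‖₊ := by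
    intro k
    have : (K.map Complex.ofReal) ^ k = (K ^ k).map Complex.ofReal :=
      (map_pow (Complex.ofRealHom.mapMatrix) K k).symm
    rw [this]
    simp [Matrix.linfty_opNNNorm_def]
  have h2 : ∀ᶠ k : ℕ in atTop, ‖K ^ k‖ ≤ 1 := by
    filter_upwards [h1, eventually_gt_atTop 0] with k hk hk0
    rw [hn] at hk
    by_contra hc
    push Not at hc
    have : (1 : ℝ≥0∞) ≤ (‖K ^ k‖₊ : ℝ≥0∞) ^ (1 / (k : ℝ)) := by
      apply ENNReal.one_le_rpow
      · exact_mod_cast hc.le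
      · positivity
    exact absurd hk (not_lt.mpr this)
  obtain ⟨N, hN⟩ := eventually_atTop.mp h2
  refine ⟨1 + ∑ k ∈ Finset.range N, ‖K ^ k‖, fun k => ?_⟩
  have hs : 0 ≤ ∑ k ∈ Finset.range N, ‖K ^ k‖ := Finset.sum_nonneg fun _ _ => norm_nonneg _
  rcases le_or_gt N k with hk | hk
  · linarith [hN k hk]
  · have := Finset.single_le_sum (f := fun k => ‖K ^ k‖) (fun _ _ => norm_nonneg _)
      (Finset.mem_range.mpr hk)
    linarith

theorem aux_block {n m : ℕ} (A : Matrix (Fin n) (Fin n) ℝ)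
    (B : Matrix (Fin n) (Fin m) ℝ) (F : Matrix (Fin m) (Fin n) ℝ) (k : ℕ) :
    (blockAF A B F) ^ (k + 1) = extendF F * (A + B * F) ^ k * Matrix.fromCols A B := by
  have h0 : blockAF A B F = extendF F * Matrix.fromCols A B := by
    simp [blockAF, extendF, Matrix.fromRows_mul_fromCols]
  have h1 : Matrix.fromCols A B * extendF F = A + B * F := by
    simp [extendF, Matrix.fromCols_mul_fromRows]
  induction k with
  | zero => simp [h0]
  | succ k ih =>
    rw [pow_succ, ih, h0, pow_succ, ← h1]
    simp only [Matrix.mul_assoc]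

theorem aux_block_bdd {n m : ℕ} (A : Matrix (Fin n) (Fin n) ℝ)
    (B : Matrix (Fin n) (Fin m) ℝ) (F : Matrix (Fin m) (Fin n) ℝ)
    (hF : specRad (A + B * F) < 1) : ∃ C : ℝ, ∀ k : ℕ, ‖(blockAF A B F) ^ k‖ ≤ C := by
  obtain ⟨C, hC⟩ := aux_pow_bdd _ hF
  refine ⟨‖(1 : Matrix (Fin n ⊕ Fin m) (Fin n ⊕ Fin m) ℝ)‖
    + ‖extendF F‖ * C * ‖Matrix.fromCols A B‖, fun k => ?_⟩
  have hC0 : 0 ≤ C := (norm_nonneg _).trans (hC 0)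
  cases k with
  | zero => rw [pow_zero]; have : 0 ≤ ‖extendF F‖ * C * ‖Matrix.fromCols A B‖ := by positivity
            linarith
  | succ k =>
    rw [aux_block]
    have h1 : ‖extendF F * (A + B * F) ^ k * Matrix.fromCols A B‖
        ≤ ‖extendF F‖ * C * ‖Matrix.fromCols A B‖ :=
      (Matrix.linfty_opNorm_mul _ _).trans (mul_le_mul_of_nonneg_right
        ((Matrix.linfty_opNorm_mul _ _).trans
          (mul_le_mul_of_nonneg_left (hC k) (norm_nonneg _))) (norm_nonneg _))
    have := norm_nonneg (1 : Matrix (Fin n ⊕ Fin m) (Fin n ⊕ Fin m) ℝ)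
    linarith

theorem aux_transpose_bdd {ι : Type*} [Fintype ι] [DecidableEq ι] :
    ∃ c : ℝ, 0 ≤ c ∧ ∀ X : Matrix ι ι ℝ, ‖Xᵀ‖ ≤ c * ‖X‖ := by
  refine ⟨(Fintype.card ι : ℝ), by positivity, fun X => ?_⟩
  have key : ‖Xᵀ‖₊ ≤ (Fintype.card ι : NNReal) * ‖X‖₊ := by
    rw [Matrix.linfty_opNNNorm_def Xᵀ]
    refine Finset.sup_le fun i _ => ?_
    have hle : ∀ j ∈ (Finset.univ : Finset ι), ‖Xᵀ i j‖₊ ≤ ‖X‖₊ := by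
      intro j _
      rw [Matrix.linfty_opNNNorm_def X, Matrix.transpose_apply]
      refine le_trans ?_ (Finset.le_sup (f := fun i => ∑ l, ‖X i l‖₊) (Finset.mem_univ j))
      exact Finset.single_le_sum (f := fun l => ‖X j l‖₊) (fun _ _ => zero_le) (Finset.mem_univ i)
    refine (Finset.sum_le_sum hle).trans ?_
    simp
  exact_mod_cast key

theorem aux_conj_bdd {ι : Type*} [Fintype ι] [DecidableEq ι] (M : Matrix ι ι ℝ)
    (hM : ∃ C : ℝ, ∀ k : ℕ, ‖M ^ k‖ ≤ C) (X : Matrix ι ι ℝ) :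
    ∃ C : ℝ, ∀ k : ℕ, ‖M ^ k * X * (M ^ k)ᵀ‖ ≤ C := by
  obtain ⟨C, hC⟩ := hM
  obtain ⟨c, hc, hT⟩ := aux_transpose_bdd (ι := ι)
  have hC0 : 0 ≤ C := (norm_nonneg _).trans (hC 0)
  refine ⟨C * ‖X‖ * (c * C), fun k => ?_⟩
  refine (norm_mul_le _ _).trans (mul_le_mul ((norm_mul_le _ _).trans
    (mul_le_mul_of_nonneg_right (hC k) (norm_nonneg _)))
    ((hT _).trans (mul_le_mul_of_nonneg_left (hC k) hc)) (norm_nonneg _) (by positivity))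

theorem aux_summable {ι : Type*} [Fintype ι] [DecidableEq ι] (M : Matrix ι ι ℝ)
    (hM : ∃ C : ℝ, ∀ k : ℕ, ‖M ^ k‖ ≤ C) (G W : Matrix ι ι ℝ) (γ : ℝ) (h0 : 0 < γ)
    (h1 : γ < 1) :
    Summable (fun k : ℕ => γ ^ k • (M ^ k * G * (M ^ k)ᵀ
      + ∑ j ∈ Finset.range k, M ^ j * W * (M ^ j)ᵀ)) := by
  obtain ⟨C1, hC1⟩ := aux_conj_bdd M hM G
  obtain ⟨C2, hC2⟩ := aux_conj_bdd M hM W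
  have hs0 : Summable (fun k : ℕ => γ ^ k) := summable_geometric_of_lt_one h0.le h1
  have hs1 : Summable (fun k : ℕ => (k : ℝ) ^ 1 * γ ^ k) :=
    summable_pow_mul_geometric_of_norm_lt_one 1 (by rwa [Real.norm_of_nonneg h0.le])
  refine Summable.of_norm_bounded (g := fun k : ℕ => C1 * γ ^ k + C2 * ((k : ℝ) ^ 1 * γ ^ k))
    ((hs0.mul_left C1).add (hs1.mul_left C2)) fun k => ?_
  rw [norm_smul, Real.norm_of_nonneg (by positivity)]
  have hb : ‖∑ j ∈ Finset.range k, M ^ j * W * (M ^ j)ᵀ‖ ≤ k * C2 := by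
    refine (norm_sum_le_of_le _ (fun j _ => hC2 j)).trans ?_
    simp
  have := mul_le_mul_of_nonneg_left ((norm_add_le _ _).trans (add_le_add (hC1 k) hb))
    (pow_pos h0 k).le
  refine this.trans (le_of_eq ?_)
  ring

theorem aux_fix {ι : Type*} [Fintype ι] [DecidableEq ι] (M : Matrix ι ι ℝ)
    (hM : ∃ C : ℝ, ∀ k : ℕ, ‖M ^ k‖ ≤ C) (D : Matrix ι ι ℝ) (γ : ℝ) (h0 : 0 < γ)
    (h1 : γ < 1) (hD : γ • (M * D * Mᵀ) = D) : D = 0 := by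
  obtain ⟨C, hC⟩ := aux_conj_bdd M hM D
  have hk : ∀ k : ℕ, γ ^ k • (M ^ k * D * (M ^ k)ᵀ) = D := by
    intro k
    induction k with
    | zero => simp
    | succ k ih =>
      calc γ ^ (k + 1) • (M ^ (k + 1) * D * (M ^ (k + 1))ᵀ)
          = γ • (M * (γ ^ k • (M ^ k * D * (M ^ k)ᵀ)) * Mᵀ) := by
            rw [pow_succ' M, Matrix.transpose_mul, Matrix.mul_smul, Matrix.smul_mul, smul_smul,
              pow_succ']
            simp only [Matrix.mul_assoc]
        _ = D := by rw [ih, hD]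
  have hb : ∀ k : ℕ, ‖D‖ ≤ γ ^ k * C := by
    intro k
    conv_lhs => rw [← hk k]
    rw [norm_smul, Real.norm_of_nonneg (by positivity)]
    exact mul_le_mul_of_nonneg_left (hC k) (by positivity)
  have ht : Tendsto (fun k : ℕ => γ ^ k * C) atTop (nhds (0 * C)) :=
    (tendsto_pow_atTop_nhds_zero_of_lt_one h0.le h1).mul_const C
  rw [zero_mul] at ht
  exact norm_le_zero_iff.mp (ge_of_tendsto' ht hb)

end helpers

theorem aux_psd_hasSum {ι : Type*} [Fintype ι] [DecidableEq ι] {f : ℕ → Matrix ι ι ℝ}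
    {S : Matrix ι ι ℝ} (hf : ∀ k, (f k).PosSemidef) (h : HasSum f S) : S.PosSemidef := by
  refine Matrix.PosSemidef.of_dotProduct_mulVec_nonneg ?_ ?_
  · have h2 : HasSum (fun k => (f k)ᴴ) Sᴴ := h.matrix_conjTranspose
    have : (fun k => (f k)ᴴ) = f := funext fun k => (hf k).isHermitian
    rw [this] at h2
    exact h2.unique h
  · intro x
    let φ : Matrix ι ι ℝ →+ ℝ :=
      { toFun := fun X => star x ⬝ᵥ (X *ᵥ x)
        map_zero' := by simp
        map_add' := fun X Y => by simp [Matrix.add_mulVec, dotProduct_add] }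
    have hφ : Continuous φ := by
      change Continuous fun X : Matrix ι ι ℝ => star x ⬝ᵥ (X *ᵥ x)
      fun_prop
    have := h.map φ hφ
    exact this.nonneg fun k => (hf k).dotProduct_mulVec_nonneg x

theorem series_solves_lyapunov (n m : ℕ) (hn : 0 < n) (hm : 0 < m)
    (A : Matrix (Fin n) (Fin n) ℝ) (B : Matrix (Fin n) (Fin m) ℝ)
    (γ : ℝ) (hγ0 : 0 < γ) (hγ1 : γ < 1)
    (Sw : Matrix (Fin n) (Fin n) ℝ) (hSw : Sw.PosDef)
    (Γ : Matrix (Fin n ⊕ Fin m) (Fin n ⊕ Fin m) ℝ) (hΓ : Γ.PosDef)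
    (F : Matrix (Fin m) (Fin n) ℝ) (hF : specRad (A + B * F) < 1) :
    ∃ S : Matrix (Fin n ⊕ Fin m) (Fin n ⊕ Fin m) ℝ,
      HasSum (fun k : ℕ => γ ^ k •
          ((blockAF A B F) ^ k * Γ * ((blockAF A B F) ^ k)ᵀ
            + ∑ j ∈ Finset.range k,
                (blockAF A B F) ^ j * (extendF F * Sw * (extendF F)ᵀ)
                  * ((blockAF A B F) ^ j)ᵀ)) S ∧
      S.PosDef ∧
      γ • (blockAF A B F * S * (blockAF A B F)ᵀ) + Γ
          + (γ / (1 - γ)) • (extendF F * Sw * (extendF F)ᵀ) = S ∧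
      ∀ S' : Matrix (Fin n ⊕ Fin m) (Fin n ⊕ Fin m) ℝ, S'.PosDef →
        γ • (blockAF A B F * S' * (blockAF A B F)ᵀ) + Γ
            + (γ / (1 - γ)) • (extendF F * Sw * (extendF F)ᵀ) = S' → S' = S := by
  have hM := aux_block_bdd A B F hF
  set M := blockAF A B F with hMdef
  set W := extendF F * Sw * (extendF F)ᵀ with hW
  have hWp : W.PosSemidef := by
    have := hSw.posSemidef.mul_mul_conjTranspose_same (extendF F)
    rwa [Matrix.conjTranspose_eq_transpose_of_trivial] at this
  have hconj : ∀ (X : Matrix (Fin n ⊕ Fin m) (Fin n ⊕ Fin m) ℝ), X.PosSemidef →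
      ∀ Y : Matrix (Fin n ⊕ Fin m) (Fin n ⊕ Fin m) ℝ, (Y * X * Yᵀ).PosSemidef := by
    intro X hX Y
    have := hX.mul_mul_conjTranspose_same Y
    rwa [Matrix.conjTranspose_eq_transpose_of_trivial] at this
  have hs := aux_summable M hM Γ W γ hγ0 hγ1
  set f : ℕ → Matrix (Fin n ⊕ Fin m) (Fin n ⊕ Fin m) ℝ := fun k => γ ^ k • (M ^ k * Γ * (M ^ k)ᵀ
      + ∑ j ∈ Finset.range k, M ^ j * W * (M ^ j)ᵀ) with hf
  obtain ⟨S, hS⟩ := hs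
  have hf0 : f 0 = Γ := by simp [hf]
  have hfp : ∀ k, (f k).PosSemidef := by
    intro k
    refine Matrix.PosSemidef.smul (Matrix.PosSemidef.add (hconj _ hΓ.posSemidef _) ?_)
      (pow_pos hγ0 k).le
    exact Matrix.posSemidef_sum _ fun j _ => hconj _ hWp _
  have hrec : ∀ k, f (k + 1) = γ • (M * f k * Mᵀ) + γ ^ k • γ • W := by
    intro k
    simp only [hf]
    rw [Finset.sum_range_succ', Matrix.mul_smul, Matrix.smul_mul, smul_smul, smul_smul,
      ← pow_succ', ← pow_succ, ← smul_add]
    congr 1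
    rw [Matrix.mul_add, Matrix.add_mul, Finset.mul_sum, Finset.sum_mul, pow_zero]
    simp only [pow_succ' M, Matrix.transpose_mul, Matrix.mul_assoc, Matrix.transpose_one,
      Matrix.mul_one, Matrix.one_mul, add_assoc]
  have hSp := aux_psd_hasSum hfp hS
  have hgeo : HasSum (fun k : ℕ => γ ^ k • γ • W) ((1 - γ)⁻¹ • γ • W) :=
    (hasSum_geometric_of_lt_one hγ0.le hγ1).smul_const (γ • W)
  have hconjS : HasSum (fun k => γ • (M * f k * Mᵀ)) (γ • (M * S * Mᵀ)) := by
    exact ((hS.mul_left M).mul_right Mᵀ).const_smul γ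
  have hshift : HasSum (fun k => f (k + 1)) (γ • (M * S * Mᵀ) + (1 - γ)⁻¹ • γ • W) := by
    simp only [hrec]
    exact hconjS.add hgeo
  have h2 := hshift.zero_add
  rw [hf0] at h2
  have heq : γ • (M * S * Mᵀ) + Γ + (γ / (1 - γ)) • W = S := by
    have h3 := h2.unique hS
    rw [smul_smul, ← div_eq_inv_mul] at h3
    refine Eq.trans ?_ h3
    abel
  refine ⟨S, hS, ?_, heq, ?_⟩
  · rw [← heq]
    refine Matrix.PosDef.add_posSemidef (Matrix.PosDef.posSemidef_add ?_ hΓ) ?_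
    · exact (hconj _ hSp _).smul hγ0.le
    · exact hWp.smul (div_nonneg hγ0.le (by linarith))
  · intro S' _ hS'
    have : S' - S = 0 := by
      apply aux_fix M hM (S' - S) γ hγ0 hγ1
      rw [Matrix.mul_sub, Matrix.sub_mul, smul_sub]
      conv_rhs => rw [← heq, ← hS']
      abel
    exact sub_eq_zero.mp this
end

section
/- Assume X* ∈ ℝ^{n×n} is symmetric positive semidefinite, satisfies the discounted ARE X* = Q + γA'X*A − γ²A'X*B(R + γB'X*B)⁻¹B'X*A, and the gain F* := −γ(R + γB'X*B)⁻¹B'X*A satisfies ρ(A + BF*) < 1. Define P* := [[Q + γA'X*A, γA'X*B], [γB'X*A, R + γB'X*B]]. Then: (i) γ (A_{F*})' P* A_{F*} + Λ = P*, and P* is the unique symmetric matrix satisfying this equation; (ii) P* is positive semidefinite; (iii) the lower-right block P*22 = R + γB'X*B is positive definite; (iv) F* = −(P*22)⁻¹ (P*12)', where P*12 = γA'X*B. -/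
open Matrix MeasureTheory Filter
open scoped ENNReal

open scoped Matrix.Norms.L2Operator in
lemma exists_pow_norm_lt {n : ℕ} (K : Matrix (Fin n) (Fin n) ℂ)
    (h : spectralRadius ℂ K < 1) : ∃ k : ℕ, 1 ≤ k ∧ ‖K ^ k‖ ≤ 1 := by
  haveI : CompleteSpace (Matrix (Fin n) (Fin n) ℂ) := FiniteDimensional.complete ℂ _
  have ht := spectrum.pow_nnnorm_pow_one_div_tendsto_nhds_spectralRadius K
  have h1 := (ht.eventually_lt_const h).and (Filter.eventually_ge_atTop 1)
  obtain ⟨k, hk, hk1⟩ := h1.exists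
  refine ⟨k, hk1, ?_⟩
  by_contra hc
  push Not at hc
  have : (1 : ℝ≥0∞) ≤ (‖K ^ k‖₊ : ℝ≥0∞) ^ (1 / (k : ℝ)) := by
    apply ENNReal.one_le_rpow
    · have : (1 : NNReal) ≤ ‖K ^ k‖₊ := by
        rw [← NNReal.coe_le_coe]; simpa using hc.le
      exact_mod_cast this
    · positivity
  exact absurd hk (not_lt.mpr this)

open scoped Matrix.Norms.L2Operator in
lemma stein_zero {n : ℕ} (K Y : Matrix (Fin n) (Fin n) ℝ) (γ : ℝ) (h0 : 0 < γ) (h1 : γ < 1)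
    (h : specRad K < 1) (hY : Y = γ • (Kᵀ * Y * K)) : Y = 0 := by
  obtain ⟨k, hk, hn⟩ := exists_pow_norm_lt _ h
  set C := K.map Complex.ofReal with hC
  set Z := Y.map Complex.ofReal with hZ
  have hZe : Z = (γ : ℂ) • (Cᴴ * Z * C) := by
    have e : Cᴴ = (Kᵀ).map Complex.ofReal := by
      ext i j; simp [hC]
    rw [e]
    conv_lhs => rw [hZ, hY]
    ext i j
    simp [hC, hZ, Matrix.mul_apply]
  have hpow : ∀ j : ℕ, Z = ((γ : ℂ) ^ j) • ((C ^ j)ᴴ * Z * C ^ j) := by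
    intro j
    induction j with
    | zero => simp
    | succ j ih =>
      conv_lhs => rw [ih, hZe]
      rw [pow_succ' C j, Matrix.conjTranspose_mul, pow_succ]
      simp only [Matrix.mul_smul, Matrix.smul_mul, smul_smul, Matrix.mul_assoc]
  have hle : ‖Z‖ ≤ γ ^ k * ‖Z‖ := by
    calc ‖Z‖ = ‖((γ : ℂ) ^ k) • ((C ^ k)ᴴ * Z * C ^ k)‖ := by rw [← hpow k]
      _ = γ ^ k * ‖(C ^ k)ᴴ * Z * C ^ k‖ := by
        rw [norm_smul, norm_pow, Complex.norm_real, Real.norm_of_nonneg h0.le]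
      _ ≤ γ ^ k * (‖(C ^ k)ᴴ‖ * ‖Z‖ * ‖C ^ k‖) := by
        gcongr
        exact (norm_mul_le _ _).trans (by gcongr; exact norm_mul_le _ _)
      _ ≤ γ ^ k * (1 * ‖Z‖ * 1) := by
        rw [Matrix.l2_opNorm_conjTranspose]
        gcongr
      _ = γ ^ k * ‖Z‖ := by ring
  have hγk : γ ^ k < 1 := pow_lt_one₀ h0.le h1 (by omega)
  have hz : ‖Z‖ = 0 := by
    by_contra hne
    have : 0 < ‖Z‖ := lt_of_le_of_ne (norm_nonneg _) (Ne.symm hne)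
    nlinarith
  have hz' : Z = 0 := norm_eq_zero.mp hz
  ext i j
  have := congrFun (congrFun hz' i) j
  simpa [hZ] using this

lemma blockAF_eq {n m : ℕ} (A : Matrix (Fin n) (Fin n) ℝ)
    (B : Matrix (Fin n) (Fin m) ℝ) (F : Matrix (Fin m) (Fin n) ℝ) :
    blockAF A B F = extendF F * Matrix.fromCols A B := by
  simp [blockAF, extendF, Matrix.fromRows_mul_fromCols]

lemma Pmat_eq {n m : ℕ} (A : Matrix (Fin n) (Fin n) ℝ)
    (B : Matrix (Fin n) (Fin m) ℝ) (Q : Matrix (Fin n) (Fin n) ℝ)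
    (R : Matrix (Fin m) (Fin m) ℝ) (γ : ℝ) (X : Matrix (Fin n) (Fin n) ℝ) :
    Pmat A B Q R γ X
      = γ • ((Matrix.fromCols A B)ᵀ * X * Matrix.fromCols A B) + blockLam Q R := by
  rw [Pmat, blockLam, Matrix.transpose_fromCols, Matrix.fromRows_mul,
    Matrix.fromRows_mul_fromCols, Matrix.fromBlocks_smul, Matrix.fromBlocks_add]
  simp [add_comm]

theorem Pstar_properties (n m : ℕ) (hn : 0 < n) (hm : 0 < m)
    (A : Matrix (Fin n) (Fin n) ℝ) (B : Matrix (Fin n) (Fin m) ℝ)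
    (Q : Matrix (Fin n) (Fin n) ℝ) (R : Matrix (Fin m) (Fin m) ℝ)
    (hQ : Q.PosSemidef) (hR : R.PosDef)
    (γ : ℝ) (hγ0 : 0 < γ) (hγ1 : γ < 1)
    (Xstar : Matrix (Fin n) (Fin n) ℝ) (hXstar : Xstar.PosSemidef)
    (hARE : IsAREsol A B Q R γ Xstar)
    (hstab : specRad (A + B * gainF A B R γ Xstar) < 1) :
    (γ • ((blockAF A B (gainF A B R γ Xstar))ᵀ * Pmat A B Q R γ Xstar
          * blockAF A B (gainF A B R γ Xstar)) + blockLam Q R = Pmat A B Q R γ Xstar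
      ∧ ∀ P : Matrix (Fin n ⊕ Fin m) (Fin n ⊕ Fin m) ℝ, P.IsSymm →
          γ • ((blockAF A B (gainF A B R γ Xstar))ᵀ * P
              * blockAF A B (gainF A B R γ Xstar)) + blockLam Q R = P →
          P = Pmat A B Q R γ Xstar)
    ∧ (Pmat A B Q R γ Xstar).PosSemidef
    ∧ (R + γ • (Bᵀ * Xstar * B)).PosDef
    ∧ gainF A B R γ Xstar
        = -(((Pmat A B Q R γ Xstar).toBlocks₂₂)⁻¹ * ((Pmat A B Q R γ Xstar).toBlocks₁₂)ᵀ) := by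
  have hXt : Xstarᵀ = Xstar := by
    have := hXstar.isHermitian.eq
    rwa [Matrix.conjTranspose_eq_transpose_of_trivial] at this
  have hRt : Rᵀ = R := by
    have := hR.isHermitian.eq
    rwa [Matrix.conjTranspose_eq_transpose_of_trivial] at this
  have hBXB : (Bᵀ * Xstar * B).PosSemidef := by
    have := hXstar.conjTranspose_mul_mul_same B
    rwa [Matrix.conjTranspose_eq_transpose_of_trivial] at this
  have hS : (R + γ • (Bᵀ * Xstar * B)).PosDef := hR.add_posSemidef (hBXB.smul hγ0.le)
  have hF : (R + γ • (Bᵀ * Xstar * B)) * gainF A B R γ Xstar = -(γ • (Bᵀ * Xstar * A)) := by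
    have hu : IsUnit (R + γ • (Bᵀ * Xstar * B)).det :=
      (Matrix.isUnit_iff_isUnit_det _).mp hS.isUnit
    rw [gainF, Matrix.mul_neg, Matrix.mul_smul, Matrix.mul_nonsing_inv_cancel_left _ _ hu]
  have hARE' : Q + γ • (Aᵀ * Xstar * A) + γ • (Aᵀ * Xstar * B) * gainF A B R γ Xstar = Xstar := by
    conv_rhs => rw [hARE]
    simp only [gainF, Matrix.mul_neg, Matrix.mul_smul, Matrix.smul_mul, smul_smul, sub_eq_add_neg,
      Matrix.mul_assoc, sq]
  have hE : (extendF (gainF A B R γ Xstar))ᵀ * Pmat A B Q R γ Xstar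
      * extendF (gainF A B R γ Xstar) = Xstar := by
    rw [Matrix.mul_assoc, extendF, Pmat, Matrix.fromBlocks_mul_fromRows, Matrix.transpose_fromRows,
      Matrix.fromCols_mul_fromRows, hF]
    simp only [Matrix.mul_one, Matrix.transpose_one, Matrix.one_mul, add_neg_cancel,
      Matrix.mul_zero, add_zero]
    exact hARE'
  have hfix : γ • ((blockAF A B (gainF A B R γ Xstar))ᵀ * Pmat A B Q R γ Xstar
          * blockAF A B (gainF A B R γ Xstar)) + blockLam Q R = Pmat A B Q R γ Xstar := by
    conv_rhs => rw [Pmat_eq]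
    conv_rhs => rw [← hE]
    rw [blockAF_eq, Matrix.transpose_mul]
    simp only [Matrix.mul_assoc]
  refine ⟨⟨hfix, ?_⟩, ?_, hS, ?_⟩
  · intro P _ hP
    rw [← sub_eq_zero]
    set D := P - Pmat A B Q R γ Xstar with hD
    set E := extendF (gainF A B R γ Xstar) with hEdef
    set G := Matrix.fromCols A B with hG
    have hDe : D = γ • (Gᵀ * (Eᵀ * D * E) * G) := by
      have h1 : D = γ • ((blockAF A B (gainF A B R γ Xstar))ᵀ * D
          * blockAF A B (gainF A B R γ Xstar)) := by
        rw [hD, Matrix.mul_sub, Matrix.sub_mul, smul_sub]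
        conv_lhs => rw [← hP, ← hfix]
        abel
      conv_lhs => rw [h1]
      rw [blockAF_eq, Matrix.transpose_mul]
      simp only [Matrix.mul_assoc, hEdef, hG]
    have hGE : G * E = A + B * gainF A B R γ Xstar := by
      rw [hG, hEdef, extendF, Matrix.fromCols_mul_fromRows, Matrix.mul_one]
    have hY : Eᵀ * D * E = 0 := by
      apply stein_zero (A + B * gainF A B R γ Xstar) _ γ hγ0 hγ1 hstab
      conv_lhs => rw [hDe]
      rw [← hGE, Matrix.transpose_mul]
      simp only [Matrix.mul_assoc, Matrix.mul_smul, Matrix.smul_mul]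
    rw [hDe, hY]
    simp
  · rw [Pmat_eq]
    refine Matrix.PosSemidef.add (Matrix.PosSemidef.smul ?_ hγ0.le) ?_
    · have := hXstar.conjTranspose_mul_mul_same (Matrix.fromCols A B)
      rwa [Matrix.conjTranspose_eq_transpose_of_trivial] at this
    · have hQ1 := hQ.conjTranspose_mul_mul_same
        (Matrix.fromCols (1 : Matrix (Fin n) (Fin n) ℝ) (0 : Matrix (Fin n) (Fin m) ℝ))
      have hR1 := hR.posSemidef.conjTranspose_mul_mul_same
        (Matrix.fromCols (0 : Matrix (Fin m) (Fin n) ℝ) (1 : Matrix (Fin m) (Fin m) ℝ))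
      have := hQ1.add hR1
      rw [Matrix.conjTranspose_eq_transpose_of_trivial,
        Matrix.conjTranspose_eq_transpose_of_trivial, Matrix.transpose_fromCols,
        Matrix.transpose_fromCols, Matrix.fromRows_mul _ _ Q, Matrix.fromRows_mul _ _ R,
        Matrix.fromRows_mul_fromCols, Matrix.fromRows_mul_fromCols, Matrix.fromBlocks_add] at this
      simpa [blockLam] using this
  · rw [Pmat, Matrix.toBlocks_fromBlocks₂₂, Matrix.toBlocks_fromBlocks₁₂, gainF]
    simp only [Matrix.transpose_smul, Matrix.transpose_mul, Matrix.transpose_transpose, hXt,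
      Matrix.mul_smul, Matrix.mul_assoc]
end

section
/- Let P ∈ ℝ^{(n+m)×(n+m)} be symmetric positive semidefinite with blocks P11, P12, P22 such that P22 is positive definite, let F := −P22⁻¹ P12', and suppose γ A_F' P A_F + Λ = P. Then X̄ := P11 − P12 P22⁻¹ P12' is symmetric positive semidefinite and satisfies the discounted ARE X̄ = Q + γA'X̄A − γ²A'X̄B(R + γB'X̄B)⁻¹B'X̄A; moreover P11 = Q + γA'X̄A, P12 = γA'X̄B, P22 = R + γB'X̄B, and F = −γ(R + γB'X̄B)⁻¹B'X̄A. Consequently, if the discounted ARE has a unique symmetric positive semidefinite solution X*, then P = P* := [[Q + γA'X*A, γA'X*B], [γB'X*A, R + γB'X*B]] and F = F* := −γ(R + γB'X*B)⁻¹B'X*A. -/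
open Matrix MeasureTheory Filter
open scoped ENNReal

theorem kkt_aux {n m : ℕ}
    (A : Matrix (Fin n) (Fin n) ℝ) (B : Matrix (Fin n) (Fin m) ℝ)
    (Q : Matrix (Fin n) (Fin n) ℝ) (R : Matrix (Fin m) (Fin m) ℝ) (γ : ℝ)
    (a : Matrix (Fin n) (Fin n) ℝ) (b : Matrix (Fin n) (Fin m) ℝ)
    (d : Matrix (Fin m) (Fin m) ℝ) (hd : d.PosDef)
    (X : Matrix (Fin n) (Fin n) ℝ) (hX : X = a - b * d⁻¹ * bᵀ)
    (F : Matrix (Fin m) (Fin n) ℝ) (hF : F = -(d⁻¹ * bᵀ)) :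
    γ • ((blockAF A B F)ᵀ * fromBlocks a b bᵀ d * blockAF A B F) + blockLam Q R
      = Pmat A B Q R γ X := by
  have hu : IsUnit d.det := (Matrix.isUnit_iff_isUnit_det d).1 hd.isUnit
  have h1 : a + b * F = X := by
    rw [hF, hX, Matrix.mul_neg, Matrix.mul_assoc, sub_eq_add_neg]
  have h2 : bᵀ + d * F = 0 := by
    rw [hF, Matrix.mul_neg, Matrix.mul_nonsing_inv_cancel_left _ _ hu, add_neg_cancel]
  have h3 : fromBlocks a b bᵀ d * blockAF A B F = fromBlocks (X * A) (X * B) 0 0 := by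
    simp only [blockAF, fromBlocks_multiply, ← Matrix.mul_assoc, ← Matrix.add_mul, h1, h2,
      Matrix.zero_mul]
  rw [Matrix.mul_assoc, h3]
  simp only [blockAF, blockLam, Pmat, fromBlocks_transpose, fromBlocks_multiply,
    fromBlocks_smul, fromBlocks_add, Matrix.mul_zero, add_zero, ← Matrix.mul_assoc]
  simp only [add_comm]

theorem kkt_solution_is_riccati (n m : ℕ) (hn : 0 < n) (hm : 0 < m)
    (A : Matrix (Fin n) (Fin n) ℝ) (B : Matrix (Fin n) (Fin m) ℝ)
    (Q : Matrix (Fin n) (Fin n) ℝ) (R : Matrix (Fin m) (Fin m) ℝ)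
    (hQ : Q.PosSemidef) (hR : R.PosDef)
    (γ : ℝ) (hγ0 : 0 < γ) (hγ1 : γ < 1)
    (P : Matrix (Fin n ⊕ Fin m) (Fin n ⊕ Fin m) ℝ)
    (hP : P.PosSemidef) (hP22 : (P.toBlocks₂₂).PosDef)
    (F : Matrix (Fin m) (Fin n) ℝ)
    (hFdef : F = -((P.toBlocks₂₂)⁻¹ * (P.toBlocks₁₂)ᵀ))
    (hPeq : γ • ((blockAF A B F)ᵀ * P * blockAF A B F) + blockLam Q R = P) :
    (P.toBlocks₁₁ - P.toBlocks₁₂ * (P.toBlocks₂₂)⁻¹ * (P.toBlocks₁₂)ᵀ).PosSemidef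
    ∧ IsAREsol A B Q R γ
        (P.toBlocks₁₁ - P.toBlocks₁₂ * (P.toBlocks₂₂)⁻¹ * (P.toBlocks₁₂)ᵀ)
    ∧ P.toBlocks₁₁ = Q + γ • (Aᵀ
        * (P.toBlocks₁₁ - P.toBlocks₁₂ * (P.toBlocks₂₂)⁻¹ * (P.toBlocks₁₂)ᵀ) * A)
    ∧ P.toBlocks₁₂ = γ • (Aᵀ
        * (P.toBlocks₁₁ - P.toBlocks₁₂ * (P.toBlocks₂₂)⁻¹ * (P.toBlocks₁₂)ᵀ) * B)
    ∧ P.toBlocks₂₂ = R + γ • (Bᵀ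
        * (P.toBlocks₁₁ - P.toBlocks₁₂ * (P.toBlocks₂₂)⁻¹ * (P.toBlocks₁₂)ᵀ) * B)
    ∧ F = gainF A B R γ
        (P.toBlocks₁₁ - P.toBlocks₁₂ * (P.toBlocks₂₂)⁻¹ * (P.toBlocks₁₂)ᵀ)
    ∧ ∀ Xstar : Matrix (Fin n) (Fin n) ℝ,
        Xstar.PosSemidef → IsAREsol A B Q R γ Xstar →
        (∀ Y : Matrix (Fin n) (Fin n) ℝ, Y.PosSemidef → IsAREsol A B Q R γ Y → Y = Xstar) →
        P = Pmat A B Q R γ Xstar ∧ F = gainF A B R γ Xstar := by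
  obtain ⟨a, b, c, d, rfl⟩ : ∃ a b c d, P = fromBlocks a b c d :=
    ⟨_, _, _, _, (fromBlocks_toBlocks P).symm⟩
  simp only [toBlocks_fromBlocks₁₁, toBlocks_fromBlocks₁₂, toBlocks_fromBlocks₂₂] at *
  have hc : c = bᵀ := by
    have h := hP.1
    rw [IsHermitian, fromBlocks_conjTranspose, fromBlocks_inj] at h
    rw [← h.2.2.1, conjTranspose_eq_transpose_of_trivial]
  subst hc
  have hpsd : (a - b * d⁻¹ * bᵀ).PosSemidef := by
    haveI : Invertible d := hP22.isUnit.invertible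
    have := (PosDef.fromBlocks₂₂ a b hP22).1
      (by rw [conjTranspose_eq_transpose_of_trivial]; exact hP)
    rwa [conjTranspose_eq_transpose_of_trivial] at this
  generalize hX : a - b * d⁻¹ * bᵀ = X at *
  have key := kkt_aux A B Q R γ a b d hP22 X hX.symm F hFdef
  rw [hPeq] at key
  have key' := key
  rw [Pmat, fromBlocks_inj] at key'
  obtain ⟨e1, e2, e3, e4⟩ := key'
  have hG : F = gainF A B R γ X := by
    rw [hFdef, gainF, ← e4, e3, Matrix.mul_smul]
  have hA : IsAREsol A B Q R γ X := by
    rw [IsAREsol, ← e4, ← e1]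
    conv_lhs => rw [← hX, e3, e2]
    simp only [Matrix.smul_mul, Matrix.mul_smul, smul_smul, pow_two]
  refine ⟨hpsd, hA, e1, e2, e4, hG, ?_⟩
  intro Xs _ _ hu
  have := hu X hpsd hA
  subst this
  exact ⟨key, hG⟩
end

section
/- Assume the discounted ARE has a unique symmetric positive semidefinite solution X* with stabilizing gain F* := −γ(R + γB'X*B)⁻¹B'X*A satisfying ρ(A + BF*) < 1, define P* := [[Q + γA'X*A, γA'X*B], [γB'X*A, R + γB'X*B]], and let F⁰ ∈ ℝ^{m×n} satisfy ρ(A + BF⁰) < 1. Define the primal-dual iteration: P^s is the unique symmetric solution of γ (A_{F^s})' P A_{F^s} + Λ = P, and F^{s+1} := −(P^s_{22})⁻¹ (P^s_{12})'. Then the sequences converge: P^s → P* and F^s → F* as s → ∞ (entrywise). -/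
open Matrix MeasureTheory Filter
open scoped ENNReal

/-- quadratic form -/
noncomputable def qf {n : ℕ} (X : Matrix (Fin n) (Fin n) ℝ) (x : Fin n → ℝ) : ℝ := x ⬝ᵥ (X *ᵥ x)

lemma qf_conj {n m : ℕ} (X : Matrix (Fin n) (Fin n) ℝ) (M : Matrix (Fin n) (Fin m) ℝ) (x : Fin m → ℝ) :
    qf (Mᵀ * X * M) x = qf X (M *ᵥ x) := by
  unfold qf
  rw [← Matrix.mulVec_mulVec, ← Matrix.mulVec_mulVec, Matrix.dotProduct_mulVec, Matrix.vecMul_transpose]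

lemma qf_add {n : ℕ} (X Y : Matrix (Fin n) (Fin n) ℝ) (x : Fin n → ℝ) :
    qf (X + Y) x = qf X x + qf Y x := by
  simp [qf, Matrix.add_mulVec]

lemma qf_sub {n : ℕ} (X Y : Matrix (Fin n) (Fin n) ℝ) (x : Fin n → ℝ) :
    qf (X - Y) x = qf X x - qf Y x := by
  simp [qf, Matrix.sub_mulVec]

lemma sym_dot {n : ℕ} {X : Matrix (Fin n) (Fin n) ℝ} (hX : Xᵀ = X) (x y : Fin n → ℝ) :
    y ⬝ᵥ (X *ᵥ x) = x ⬝ᵥ (X *ᵥ y) := by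
  rw [Matrix.dotProduct_mulVec, dotProduct_comm, ← Matrix.mulVec_transpose, hX]

lemma qf_rot {n : ℕ} {X : Matrix (Fin n) (Fin n) ℝ} (hX : Xᵀ = X) (a b : Fin n → ℝ) (α β : ℝ) :
    qf X (α • a - β • b) + qf X (β • a + α • b) = (α^2+β^2) * (qf X a + qf X b) := by
  have := sym_dot hX a b
  simp only [qf, Matrix.mulVec_sub, Matrix.mulVec_add, Matrix.mulVec_smul, dotProduct_sub, dotProduct_add, sub_dotProduct, add_dotProduct, smul_dotProduct, dotProduct_smul, smul_eq_mul, this]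
  ring

lemma qf_nonneg {n : ℕ} {X : Matrix (Fin n) (Fin n) ℝ} (hX : X.PosSemidef) (x : Fin n → ℝ) : 0 ≤ qf X x := by
  simpa [qf] using hX.dotProduct_mulVec_nonneg x

lemma psd_of_qf {n : ℕ} {X : Matrix (Fin n) (Fin n) ℝ} (hX : Xᵀ = X) (h : ∀ x, 0 ≤ qf X x) : X.PosSemidef := by
  apply Matrix.PosSemidef.of_dotProduct_mulVec_nonneg
  · simpa [Matrix.IsHermitian] using hX
  · intro x; simpa [qf] using h x

/-- real form of: no complex eigenvalue of modulus at least one -/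
def Stab {n : ℕ} (M : Matrix (Fin n) (Fin n) ℝ) : Prop :=
  ∀ (α β : ℝ) (a b : Fin n → ℝ), M *ᵥ a = α • a - β • b → M *ᵥ b = β • a + α • b →
    1 ≤ α^2 + β^2 → a = 0 ∧ b = 0

lemma spec_iff {n : ℕ} (M : Matrix (Fin n) (Fin n) ℂ) (z : ℂ) :
    z ∈ spectrum ℂ M ↔ ∃ v : Fin n → ℂ, v ≠ 0 ∧ M *ᵥ v = z • v := by
  rw [← Matrix.spectrum_toLin', ← Module.End.hasEigenvalue_iff_mem_spectrum]
  constructor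
  · intro h
    obtain ⟨v, hv⟩ := h.exists_hasEigenvector
    exact ⟨v, hv.2, by simpa using hv.apply_eq_smul⟩
  · rintro ⟨v, hv, h⟩
    exact Module.End.hasEigenvalue_of_hasEigenvector (x := v) ⟨by simpa [Module.End.mem_eigenspace_iff] using h, hv⟩

lemma map_mulVec_re {n : ℕ} (M : Matrix (Fin n) (Fin n) ℝ) (v : Fin n → ℂ) (i : Fin n) :
    ((M.map Complex.ofReal) *ᵥ v) i = ⟨(M *ᵥ (fun j => (v j).re)) i, (M *ᵥ (fun j => (v j).im)) i⟩ := by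
  apply Complex.ext <;> simp [Matrix.mulVec, dotProduct]

lemma Stab.spec {n : ℕ} {M : Matrix (Fin n) (Fin n) ℝ} (h : Stab M) (z : ℂ)
    (hz : z ∈ spectrum ℂ (M.map Complex.ofReal)) : ‖z‖ < 1 := by
  obtain ⟨v, hv, hM⟩ := (spec_iff _ _).1 hz
  by_contra hc
  push Not at hc
  have key : ∀ i, _ := fun i => (map_mulVec_re M v i).symm.trans (congrFun hM i)
  obtain ⟨h1, h2⟩ := h z.re z.im (fun j => (v j).re) (fun j => (v j).im)
    (by ext i; have := congrArg Complex.re (key i); simpa using this)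
    (by ext i; have := congrArg Complex.im (key i); simp at this ⊢; linarith)
    (by have := Complex.sq_norm z; rw [Complex.normSq_apply] at this; nlinarith)
  apply hv
  ext i
  exact Complex.ext (congrFun h1 i) (congrFun h2 i)

lemma stab_of_spec {n : ℕ} {M : Matrix (Fin n) (Fin n) ℝ}
    (h : spectralRadius ℂ (M.map Complex.ofReal) < 1) : Stab M := by
  intro α β a b ha hb h1
  by_contra hc
  have hz : (⟨α, β⟩ : ℂ) ∈ spectrum ℂ (M.map Complex.ofReal) := by
    rw [spec_iff]
    refine ⟨fun i => ⟨a i, b i⟩, ?_, ?_⟩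
    · intro h0
      apply hc
      constructor
      · ext i; simpa using congrArg Complex.re (congrFun h0 i)
      · ext i; simpa using congrArg Complex.im (congrFun h0 i)
    · ext i
      rw [map_mulVec_re]
      simp only [ha, hb]
      apply Complex.ext <;> simp
      ring
  have h2 : (‖(⟨α, β⟩ : ℂ)‖₊ : ENNReal) < 1 :=
    lt_of_le_of_lt (le_iSup₂ (f := fun (k : ℂ) (_ : k ∈ spectrum ℂ (M.map Complex.ofReal)) => (‖k‖₊ : ENNReal)) _ hz) h
  have h3 : ‖(⟨α, β⟩ : ℂ)‖ < 1 := by exact_mod_cast h2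
  have := Complex.sq_norm (⟨α, β⟩ : ℂ)
  rw [Complex.normSq_apply] at this
  have := norm_nonneg (⟨α, β⟩ : ℂ)
  simp only at *
  nlinarith

lemma Stab.smul {n : ℕ} {M : Matrix (Fin n) (Fin n) ℝ} (h : Stab M) {g : ℝ} (h0 : 0 < g) (h1 : g ≤ 1) : Stab (g • M) := by
  intro α β a b ha hb hm
  apply h (g⁻¹ * α) (g⁻¹ * β) a b
  · rw [mul_smul, mul_smul, ← smul_sub, ← ha, Matrix.smul_mulVec, smul_smul, inv_mul_cancel₀ h0.ne', one_smul]
  · rw [mul_smul, mul_smul, ← smul_add, ← hb, Matrix.smul_mulVec, smul_smul, inv_mul_cancel₀ h0.ne', one_smul]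
  · have : 1 ≤ g⁻¹ := (one_le_inv₀ h0).2 h1
    have h2 : 1 ≤ g⁻¹^2 := by nlinarith
    nlinarith

section
attribute [local instance] Matrix.linftyOpNormedRing Matrix.linftyOpNormedAlgebra

lemma pow_tendsto {n : ℕ} (M : Matrix (Fin n) (Fin n) ℂ) (h : ∀ z ∈ spectrum ℂ M, ‖z‖ < 1) :
    Tendsto (fun k => M ^ k) atTop (nhds 0) := by
  rcases Nat.eq_zero_or_pos n with h0 | h0
  · subst h0
    have : (fun k => M ^ k) = fun _ => 0 := by ext k i; exact i.elim0
    rw [this]; exact tendsto_const_nhds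
  have : Nonempty (Fin n) := ⟨⟨0, h0⟩⟩
  have : CompleteSpace (Matrix (Fin n) (Fin n) ℂ) := FiniteDimensional.complete ℂ _
  have h1 : spectralRadius ℂ M < (1 : NNReal) :=
    spectrum.spectralRadius_lt_of_forall_lt M (fun z hz => by exact_mod_cast h z hz)
  obtain ⟨r, hr1, hr2⟩ := ENNReal.lt_iff_exists_nnreal_btwn.1 h1
  have hg := spectrum.pow_nnnorm_pow_one_div_tendsto_nhds_spectralRadius M
  have hr2' : r < 1 := by exact_mod_cast hr2
  refine tendsto_zero_iff_norm_tendsto_zero.2 ?_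
  refine squeeze_zero' (g := fun k => (r : ℝ)^k) (Eventually.of_forall fun k => norm_nonneg _) ?_
    (tendsto_pow_atTop_nhds_zero_of_lt_one r.2 (by exact_mod_cast hr2'))
  filter_upwards [hg.eventually (gt_mem_nhds hr1), eventually_gt_atTop 0] with k hk hk0
  have h2 := ENNReal.rpow_le_rpow hk.le (z := (k : ℝ)) (by positivity)
  rw [← ENNReal.rpow_mul, one_div, inv_mul_cancel₀ (by positivity), ENNReal.rpow_one, ENNReal.rpow_natCast] at h2
  exact_mod_cast h2
end

lemma Stab.tendsto {n : ℕ} {M : Matrix (Fin n) (Fin n) ℝ} (h : Stab M) (x : Fin n → ℝ) :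
    Tendsto (fun k => (M ^ k) *ᵥ x) atTop (nhds 0) := by
  have h1 := pow_tendsto _ h.spec
  have h2 : Tendsto (fun k => M ^ k) atTop (nhds 0) := by
    have hc : Continuous (fun N : Matrix (Fin n) (Fin n) ℂ => N.map Complex.re) :=
      continuous_id.matrix_map Complex.continuous_re
    have h3 := (hc.tendsto 0).comp h1
    have e : ∀ k, ((M.map Complex.ofReal) ^ k).map Complex.re = M ^ k := by
      intro k
      have : (M.map Complex.ofReal) ^ k = (M ^ k).map Complex.ofReal :=
        (map_pow (Complex.ofRealHom.mapMatrix) M k).symm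
      rw [this]; ext i j; simp
    simp only [Function.comp_def, e] at h3
    convert h3 using 2
    ext i j; simp
  have hc : Continuous (fun N : Matrix (Fin n) (Fin n) ℝ => N *ᵥ x) :=
    continuous_id.matrix_mulVec continuous_const
  have h3 := (hc.tendsto 0).comp h2
  simpa [Function.comp_def] using h3

lemma lyap_nonneg {n : ℕ} {M X : Matrix (Fin n) (Fin n) ℝ} (h : Stab M)
    (hX : ∀ x, qf X (M *ᵥ x) ≤ qf X x) (x : Fin n → ℝ) : 0 ≤ qf X x := by
  have hc : Continuous (qf X) := by
    unfold qf
    exact continuous_id.dotProduct (continuous_const.matrix_mulVec continuous_id)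
  have h1 := (hc.tendsto 0).comp (h.tendsto x)
  have h0 : qf X 0 = 0 := by simp [qf]
  rw [h0] at h1
  refine le_of_tendsto' h1 (fun k => ?_)
  simp only [Function.comp_def]
  induction k with
  | zero => simp
  | succ k ih =>
    rw [pow_succ', ← Matrix.mulVec_mulVec]
    exact (hX _).trans ih

lemma key_id {n m : ℕ} {A X : Matrix (Fin n) (Fin n) ℝ} {B : Matrix (Fin n) (Fin m) ℝ}
    {R : Matrix (Fin m) (Fin m) ℝ} {F G : Matrix (Fin m) (Fin n) ℝ}
    (hX : Xᵀ = X) (hR : Rᵀ = R) (hG : (R + Bᵀ * X * B) * G = -(Bᵀ * X * A)) (x : Fin n → ℝ) :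
    qf R (F *ᵥ x) + qf X ((A + B * F) *ᵥ x) = qf R (G *ᵥ x) + qf X ((A + B * G) *ᵥ x)
      + qf (R + Bᵀ * X * B) ((F - G) *ᵥ x) := by
  have hv : ∀ u : Fin m → ℝ, u ⬝ᵥ (R *ᵥ (G *ᵥ x)) + (B *ᵥ u) ⬝ᵥ (X *ᵥ (B *ᵥ (G *ᵥ x)))
      + (B *ᵥ u) ⬝ᵥ (X *ᵥ (A *ᵥ x)) = 0 := by
    intro u
    have h := congrArg (fun N => u ⬝ᵥ (N *ᵥ x)) hG
    have e : ∀ w : Fin n → ℝ, u ⬝ᵥ (Bᵀ *ᵥ w) = (B *ᵥ u) ⬝ᵥ w := by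
      intro w; rw [Matrix.dotProduct_mulVec, Matrix.vecMul_transpose]
    simp only [Matrix.add_mul, Matrix.add_mulVec, Matrix.neg_mulVec, ← Matrix.mulVec_mulVec, dotProduct_add, dotProduct_neg, e] at h
    linarith
  have h1 := hv (F *ᵥ x)
  have h2 := hv (G *ᵥ x)
  rw [qf_add, qf_conj]
  simp only [Matrix.add_mulVec, Matrix.sub_mulVec, ← Matrix.mulVec_mulVec, Matrix.mulVec_sub]
  generalize F *ᵥ x = f at *
  generalize G *ᵥ x = g at *
  generalize A *ᵥ x = a at *
  generalize B *ᵥ f = p at *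
  generalize B *ᵥ g = r at *
  simp only [qf, Matrix.mulVec_sub, Matrix.mulVec_add, dotProduct_sub, dotProduct_add, sub_dotProduct, add_dotProduct]
  have e1 := sym_dot hR f g
  have e2 := sym_dot hX p r
  have e3 := sym_dot hX p a
  have e4 := sym_dot hX r a
  linarith

lemma S_posDef {n m : ℕ} {X : Matrix (Fin n) (Fin n) ℝ} {B : Matrix (Fin n) (Fin m) ℝ}
    {R : Matrix (Fin m) (Fin m) ℝ} (hX : X.PosSemidef) (hR : R.PosDef) :
    (R + Bᵀ * X * B).PosDef := by
  apply hR.add_posSemidef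
  simpa using hX.conjTranspose_mul_mul_same B

lemma gain_eq {n m : ℕ} {A X : Matrix (Fin n) (Fin n) ℝ} {B : Matrix (Fin n) (Fin m) ℝ}
    {R : Matrix (Fin m) (Fin m) ℝ} (hX : X.PosSemidef) (hR : R.PosDef) :
    (R + Bᵀ * X * B) * (-((R + Bᵀ * X * B)⁻¹ * (Bᵀ * X * A))) = -(Bᵀ * X * A) := by
  have := (S_posDef (B := B) hX hR).isUnit
  rw [Matrix.isUnit_iff_isUnit_det] at this
  rw [Matrix.mul_neg, Matrix.mul_nonsing_inv_cancel_left _ _ this]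

lemma psd_symm {n : ℕ} {X : Matrix (Fin n) (Fin n) ℝ} (hX : X.PosSemidef) : Xᵀ = X := by
  simpa [Matrix.IsHermitian] using hX.1

lemma stab_step {n m : ℕ} {A X Q : Matrix (Fin n) (Fin n) ℝ} {B : Matrix (Fin n) (Fin m) ℝ}
    {R : Matrix (Fin m) (Fin m) ℝ} {F G : Matrix (Fin m) (Fin n) ℝ}
    (hQ : Q.PosSemidef) (hR : R.PosDef) (hX : X.PosSemidef)
    (hF : Stab (A + B * F))
    (hE : ∀ x, qf X x = qf Q x + qf R (F *ᵥ x) + qf X ((A + B * F) *ᵥ x))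
    (hG : (R + Bᵀ * X * B) * G = -(Bᵀ * X * A)) : Stab (A + B * G) := by
  intro α β a b ha hb h1
  have hXs := psd_symm hX
  have hid := key_id (F := F) hXs (psd_symm hR.posSemidef) hG
  have hrot := qf_rot hXs a b α β
  have hS := S_posDef (B := B) hX hR
  have ea := hE a
  have eb := hE b
  have ia := hid a
  have ib := hid b
  rw [ha] at ia
  rw [hb] at ib
  have p1 := qf_nonneg hQ a
  have p2 := qf_nonneg hQ b
  have p3 := qf_nonneg hR.posSemidef (G *ᵥ a)
  have p4 := qf_nonneg hR.posSemidef (G *ᵥ b)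
  have p5 := qf_nonneg hX a
  have p6 := qf_nonneg hX b
  have p7 := qf_nonneg hS.posSemidef ((F - G) *ᵥ a)
  have p8 := qf_nonneg hS.posSemidef ((F - G) *ᵥ b)
  have hle : qf (R + Bᵀ * X * B) ((F - G) *ᵥ a) + qf (R + Bᵀ * X * B) ((F - G) *ᵥ b) ≤ 0 := by
    nlinarith
  have z : ∀ v, qf (R + Bᵀ * X * B) v ≤ 0 → v = 0 := by
    intro v hv
    by_contra hne
    have := hS.dotProduct_mulVec_pos hne
    simp only [star_trivial] at this
    unfold qf at hv
    linarith
  have za := z _ (show qf (R + Bᵀ * X * B) ((F - G) *ᵥ a) ≤ 0 by linarith)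
  have zb := z _ (show qf (R + Bᵀ * X * B) ((F - G) *ᵥ b) ≤ 0 by linarith)
  have w : ∀ v, (F - G) *ᵥ v = 0 → (A + B * F) *ᵥ v = (A + B * G) *ᵥ v := by
    intro v hv
    rw [Matrix.sub_mulVec, sub_eq_zero] at hv
    rw [Matrix.add_mulVec, Matrix.add_mulVec, ← Matrix.mulVec_mulVec, ← Matrix.mulVec_mulVec, hv]
  exact hF α β a b ((w a za).trans ha) ((w b zb).trans hb) h1

lemma mono_conv {n : ℕ} (X : ℕ → Matrix (Fin n) (Fin n) ℝ) (hs : ∀ k, (X k)ᵀ = X k)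
    (h0 : ∀ k x, 0 ≤ qf (X k) x) (hm : ∀ k x, qf (X (k+1)) x ≤ qf (X k) x) :
    ∃ Y : Matrix (Fin n) (Fin n) ℝ, Tendsto X atTop (nhds Y) := by
  have hq : ∀ x, ∃ l, Tendsto (fun k => qf (X k) x) atTop (nhds l) := by
    intro x
    refine ⟨_, tendsto_atTop_ciInf (antitone_nat_of_succ_le fun k => hm k x) ⟨0, ?_⟩⟩
    rintro _ ⟨k, rfl⟩
    exact h0 k x
  choose l hl using hq
  have hpol : ∀ k i j, X k i j = (qf (X k) (Pi.single i 1 + Pi.single j 1) - qf (X k) (Pi.single i 1)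
      - qf (X k) (Pi.single j 1)) / 2 := by
    intro k i j
    have e1 := sym_dot (hs k) (Pi.single i 1) (Pi.single j 1)
    have e2 : (Pi.single i 1 : Fin n → ℝ) ⬝ᵥ (X k *ᵥ Pi.single j 1) = X k i j := by simp
    simp only [qf, Matrix.mulVec_add, dotProduct_add, add_dotProduct]
    rw [e1, e2]; ring
  refine ⟨fun i j => (l (Pi.single i 1 + Pi.single j 1) - l (Pi.single i 1) - l (Pi.single j 1)) / 2, ?_⟩
  refine tendsto_pi_nhds.2 fun i => tendsto_pi_nhds.2 fun j => ?_
  simp only [hpol]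
  exact (((hl _).sub (hl _)).sub (hl _)).div_const 2

theorem hewer {n m : ℕ} {A Q : Matrix (Fin n) (Fin n) ℝ} {B : Matrix (Fin n) (Fin m) ℝ}
    {R : Matrix (Fin m) (Fin m) ℝ} (hQ : Q.PosSemidef) (hR : R.PosDef)
    (F : ℕ → Matrix (Fin m) (Fin n) ℝ) (X : ℕ → Matrix (Fin n) (Fin n) ℝ)
    (hs : ∀ k, (X k)ᵀ = X k)
    (hE : ∀ k, X k = Q + (F k)ᵀ * R * F k + (A + B * F k)ᵀ * X k * (A + B * F k))
    (hF : ∀ k, F (k+1) = -((R + Bᵀ * X k * B)⁻¹ * (Bᵀ * X k * A)))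
    (hF0 : Stab (A + B * F 0)) :
    ∃ Y : Matrix (Fin n) (Fin n) ℝ, Y.PosSemidef ∧ Tendsto X atTop (nhds Y) ∧
      Tendsto F atTop (nhds (-((R + Bᵀ * Y * B)⁻¹ * (Bᵀ * Y * A)))) ∧
      Y = Q + Aᵀ * Y * A - Aᵀ * Y * B * (R + Bᵀ * Y * B)⁻¹ * (Bᵀ * Y * A) := by
  have hq : ∀ k x, qf (X k) x = qf Q x + qf R (F k *ᵥ x) + qf (X k) ((A + B * F k) *ᵥ x) := by
    intro k x
    conv_lhs => rw [hE k]
    rw [qf_add, qf_add, qf_conj, qf_conj]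
  have hpsd : ∀ k, Stab (A + B * F k) → (X k).PosSemidef := by
    intro k hk
    refine psd_of_qf (hs k) (lyap_nonneg hk fun x => ?_)
    have := hq k x
    have := qf_nonneg hQ x
    have := qf_nonneg hR.posSemidef (F k *ᵥ x)
    linarith
  have hG : ∀ k, (X k).PosSemidef → (R + Bᵀ * X k * B) * F (k+1) = -(Bᵀ * X k * A) := by
    intro k hk
    rw [hF]; exact gain_eq hk hR
  have hst : ∀ k, Stab (A + B * F k) := by
    intro k
    induction k with
    | zero => exact hF0
    | succ k ih => exact stab_step hQ hR (hpsd k ih) ih (hq k) (hG k (hpsd k ih))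
  have hp := fun k => hpsd k (hst k)
  have hmono : ∀ k x, qf (X (k+1)) x ≤ qf (X k) x := by
    intro k x
    have : 0 ≤ qf (X k - X (k+1)) x := by
      refine lyap_nonneg (hst (k+1)) (fun x => ?_) x
      rw [qf_sub, qf_sub]
      have h1 := hq k x
      have h2 := hq (k+1) x
      have h3 := key_id (F := F k) (hs k) (psd_symm hR.posSemidef) (hG k (hp k)) x
      have h4 := qf_nonneg (S_posDef (B := B) (hp k) hR).posSemidef ((F k - F (k+1)) *ᵥ x)
      linarith
    rw [qf_sub] at this
    linarith
  obtain ⟨Y, hY⟩ := mono_conv X hs (fun k => qf_nonneg (hp k)) hmono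
  have hYs : Yᵀ = Y := by
    have hc : Continuous (fun N : Matrix (Fin n) (Fin n) ℝ => Nᵀ) := continuous_id.matrix_transpose
    have := (hc.tendsto Y).comp hY
    simp only [Function.comp_def, hs] at this
    exact tendsto_nhds_unique this hY
  have hYp : Y.PosSemidef := by
    refine psd_of_qf hYs fun x => ?_
    have hc : Continuous (fun N : Matrix (Fin n) (Fin n) ℝ => qf N x) := by
      unfold qf
      exact continuous_const.dotProduct (continuous_id.matrix_mulVec continuous_const)
    exact ge_of_tendsto' ((hc.tendsto Y).comp hY) fun k => qf_nonneg (hp k) x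
  have hS := S_posDef (B := B) hYp hR
  have hdet : IsUnit (R + Bᵀ * Y * B).det := (Matrix.isUnit_iff_isUnit_det _).1 hS.isUnit
  have hFt : Tendsto F atTop (nhds (-((R + Bᵀ * Y * B)⁻¹ * (Bᵀ * Y * A)))) := by
    rw [← tendsto_add_atTop_iff_nat 1]
    simp only [hF]
    have hinv : Tendsto (fun k => (R + Bᵀ * X k * B)⁻¹) atTop (nhds (R + Bᵀ * Y * B)⁻¹) := by
      have hc : Continuous (fun N : Matrix (Fin n) (Fin n) ℝ => R + Bᵀ * N * B) := by fun_prop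
      have h1 : ContinuousAt Inv.inv (R + Bᵀ * Y * B) := by
        apply continuousAt_matrix_inv
        have : ContinuousAt Inv.inv (R + Bᵀ * Y * B).det := continuousAt_inv₀ hdet.ne_zero
        simpa [Ring.inverse_eq_inv'] using this
      exact h1.tendsto.comp ((hc.tendsto Y).comp hY)
    have hc2 : Continuous (fun N : Matrix (Fin n) (Fin n) ℝ => Bᵀ * N * A) := by fun_prop
    have hc3 : Continuous (fun N : Matrix (Fin m) (Fin m) ℝ × Matrix (Fin m) (Fin n) ℝ => -(N.1 * N.2)) :=
      (continuous_fst.matrix_mul continuous_snd).neg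
    exact (hc3.tendsto _).comp (hinv.prodMk_nhds ((hc2.tendsto Y).comp hY))
  refine ⟨Y, hYp, hY, hFt, ?_⟩
  have hSG := gain_eq (A := A) (B := B) hYp hR
  generalize hGd : -((R + Bᵀ * Y * B)⁻¹ * (Bᵀ * Y * A)) = G at hFt hSG
  have hlim : Y = Q + Gᵀ * R * G + (A + B * G)ᵀ * Y * (A + B * G) := by
    have hc : Continuous (fun N : Matrix (Fin n) (Fin n) ℝ × Matrix (Fin m) (Fin n) ℝ =>
        Q + N.2ᵀ * R * N.2 + (A + B * N.2)ᵀ * N.1 * (A + B * N.2)) := by fun_prop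
    have h1 := (hc.tendsto (Y, G)).comp (hY.prodMk_nhds hFt)
    refine tendsto_nhds_unique hY (h1.congr fun k => ?_)
    exact (hE k).symm
  have e : Aᵀ * Y * B * (R + Bᵀ * Y * B)⁻¹ * (Bᵀ * Y * A) = -(Aᵀ * Y * B * G) := by
    rw [← hGd]; simp [Matrix.mul_assoc]
  rw [e]
  have h5 : R * G + Bᵀ * Y * B * G = -(Bᵀ * Y * A) := by rw [← Matrix.add_mul]; exact hSG
  have h6 : Gᵀ * (R * G + Bᵀ * Y * B * G) = Gᵀ * -(Bᵀ * Y * A) := by rw [h5]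
  conv_lhs => rw [hlim]
  simp only [Matrix.transpose_add, Matrix.transpose_mul, Matrix.add_mul, Matrix.mul_add, Matrix.mul_neg, Matrix.mul_assoc] at h6 ⊢
  have h7 := eq_sub_of_add_eq h6
  rw [h7]
  abel

lemma sm {n m k l : ℕ} {g γ : ℝ} (hg : g * g = γ) (A : Matrix (Fin n) (Fin m) ℝ) (X : Matrix (Fin n) (Fin k) ℝ)
    (B : Matrix (Fin k) (Fin l) ℝ) : (g • A)ᵀ * X * (g • B) = γ • (Aᵀ * X * B) := by
  rw [Matrix.transpose_smul, Matrix.smul_mul, Matrix.smul_mul, Matrix.mul_smul, smul_smul, hg]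

lemma P_eq {n m : ℕ} {A Q : Matrix (Fin n) (Fin n) ℝ} {B : Matrix (Fin n) (Fin m) ℝ}
    {R : Matrix (Fin m) (Fin m) ℝ} {γ : ℝ} {F : Matrix (Fin m) (Fin n) ℝ}
    {P : Matrix (Fin n ⊕ Fin m) (Fin n ⊕ Fin m) ℝ}
    (h : γ • ((blockAF A B F)ᵀ * P * blockAF A B F) + blockLam Q R = P) :
    P = Pmat A B Q R γ ((extendF F)ᵀ * P * extendF F) := by
  have e : blockAF A B F = extendF F * Matrix.fromCols A B := by
    simp [blockAF, extendF, Matrix.fromRows_mul_fromCols]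
  have e2 : (blockAF A B F)ᵀ * P * blockAF A B F
      = (Matrix.fromCols A B)ᵀ * ((extendF F)ᵀ * P * extendF F) * Matrix.fromCols A B := by
    rw [e, Matrix.transpose_mul]; simp only [Matrix.mul_assoc]
  rw [e2] at h
  generalize (extendF F)ᵀ * P * extendF F = X at h ⊢
  rw [← h, Matrix.transpose_fromCols, Matrix.fromRows_mul, Matrix.fromRows_mul_fromCols, Pmat, blockLam,
    Matrix.fromBlocks_smul, Matrix.fromBlocks_add]
  simp [add_comm]

lemma X_eq {n m : ℕ} {A Q X : Matrix (Fin n) (Fin n) ℝ} {B : Matrix (Fin n) (Fin m) ℝ}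
    {R : Matrix (Fin m) (Fin m) ℝ} {γ : ℝ} {F : Matrix (Fin m) (Fin n) ℝ} :
    (extendF F)ᵀ * Pmat A B Q R γ X * extendF F =
      Q + Fᵀ * R * F + γ • ((A + B * F)ᵀ * X * (A + B * F)) := by
  rw [extendF, Pmat, Matrix.transpose_fromRows, Matrix.fromCols_mul_fromBlocks, Matrix.fromCols_mul_fromRows]
  simp only [Matrix.transpose_add, Matrix.transpose_mul, Matrix.add_mul, Matrix.mul_add, Matrix.mul_assoc,
    Matrix.transpose_one, Matrix.one_mul, Matrix.mul_one, Matrix.smul_mul, Matrix.mul_smul, smul_add]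
  abel

theorem primal_dual_iteration_converges (n m : ℕ) (hn : 0 < n) (hm : 0 < m)
    (A : Matrix (Fin n) (Fin n) ℝ) (B : Matrix (Fin n) (Fin m) ℝ)
    (Q : Matrix (Fin n) (Fin n) ℝ) (R : Matrix (Fin m) (Fin m) ℝ)
    (hQ : Q.PosSemidef) (hR : R.PosDef)
    (γ : ℝ) (hγ0 : 0 < γ) (hγ1 : γ < 1)
    (Xstar : Matrix (Fin n) (Fin n) ℝ) (hXstar : Xstar.PosSemidef)
    (hARE : IsAREsol A B Q R γ Xstar)
    (hXuniq : ∀ Y : Matrix (Fin n) (Fin n) ℝ,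
      Y.PosSemidef → IsAREsol A B Q R γ Y → Y = Xstar)
    (hstab : specRad (A + B * gainF A B R γ Xstar) < 1)
    (Fseq : ℕ → Matrix (Fin m) (Fin n) ℝ)
    (Pseq : ℕ → Matrix (Fin n ⊕ Fin m) (Fin n ⊕ Fin m) ℝ)
    (hF0 : specRad (A + B * Fseq 0) < 1)
    (hPdef : ∀ s : ℕ, (Pseq s).IsSymm
      ∧ γ • ((blockAF A B (Fseq s))ᵀ * Pseq s * blockAF A B (Fseq s))
          + blockLam Q R = Pseq s
      ∧ ∀ P' : Matrix (Fin n ⊕ Fin m) (Fin n ⊕ Fin m) ℝ, P'.IsSymm →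
          γ • ((blockAF A B (Fseq s))ᵀ * P' * blockAF A B (Fseq s))
              + blockLam Q R = P' → P' = Pseq s)
    (hFstep : ∀ s : ℕ,
      Fseq (s + 1) = -(((Pseq s).toBlocks₂₂)⁻¹ * ((Pseq s).toBlocks₁₂)ᵀ)) :
    Filter.Tendsto Pseq Filter.atTop (nhds (Pmat A B Q R γ Xstar))
      ∧ Filter.Tendsto Fseq Filter.atTop (nhds (gainF A B R γ Xstar)) := by
  
  obtain ⟨g, hg0, hg⟩ : ∃ g : ℝ, 0 < g ∧ g * g = γ :=
    ⟨Real.sqrt γ, Real.sqrt_pos.2 hγ0, Real.mul_self_sqrt hγ0.le⟩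
  have hg1 : g ≤ 1 := by nlinarith
  obtain ⟨X, hXd⟩ : ∃ X : ℕ → Matrix (Fin n) (Fin n) ℝ,
      ∀ s, X s = (extendF (Fseq s))ᵀ * Pseq s * extendF (Fseq s) := ⟨_, fun _ => rfl⟩
  have hP : ∀ s, Pseq s = Pmat A B Q R γ (X s) := by
    intro s; rw [hXd]; exact P_eq (hPdef s).2.1
  have hXs : ∀ s, (X s)ᵀ = X s := by
    intro s
    have h1 : (Pseq s)ᵀ = Pseq s := (hPdef s).1
    rw [hXd]
    simp only [Matrix.transpose_mul, Matrix.transpose_transpose, h1, Matrix.mul_assoc]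
  have hAB : ∀ F : Matrix (Fin m) (Fin n) ℝ, g • A + (g • B) * F = g • (A + B * F) := by
    intro F; rw [Matrix.smul_mul, smul_add]
  have hgain : ∀ Y : Matrix (Fin n) (Fin n) ℝ,
      -((R + (g • B)ᵀ * Y * (g • B))⁻¹ * ((g • B)ᵀ * Y * (g • A))) = gainF A B R γ Y := by
    intro Y
    rw [sm hg, sm hg, gainF, Matrix.mul_smul]
  obtain ⟨Y, hYp, hXt, hFt, hYE⟩ := hewer (A := g • A) (B := g • B) hQ hR Fseq X hXs
    (by
      intro k
      rw [hAB, sm hg, ← X_eq, ← hP]; exact hXd k)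
    (by
      intro k
      rw [hgain, hFstep, hP, Pmat, Matrix.toBlocks_fromBlocks₂₂, Matrix.toBlocks_fromBlocks₁₂, gainF,
        Matrix.transpose_smul, Matrix.mul_smul]
      simp only [Matrix.transpose_mul, Matrix.transpose_transpose, hXs, Matrix.mul_assoc])
    (by rw [hAB]; exact (stab_of_spec hF0).smul hg0 hg1)
  have hYX : Y = Xstar := by
    refine hXuniq Y hYp ?_
    unfold IsAREsol
    simp only [sm hg] at hYE
    convert hYE using 2
    rw [Matrix.mul_smul, Matrix.smul_mul, Matrix.smul_mul, smul_smul, pow_two]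
  subst hYX
  rw [hgain] at hFt
  refine ⟨?_, hFt⟩
  have hc : Continuous (fun N : Matrix (Fin n) (Fin n) ℝ => Pmat A B Q R γ N) := by
    unfold Pmat
    apply Continuous.matrix_fromBlocks <;> fun_prop
  exact ((hc.tendsto Y).comp hXt).congr fun s => (hP s).symm
end

section
/- Assume the discounted ARE has a unique symmetric positive semidefinite solution X* with stabilizing gain F* := −γ(R + γB'X*B)⁻¹B'X*A satisfying ρ(A + BF*) < 1, and let S* := S(F*) be the unique symmetric positive definite solution of γ A_{F*} S A_{F*}' + Γ + (γ/(1−γ)) F̄* Σw (F̄*)' = S. Consider the feasible set 𝒮 := {(S, F) : S ∈ ℝ^{(n+m)×(n+m)} symmetric positive definite, F ∈ ℝ^{m×n}, γ A_F S A_F' + Γ + (γ/(1−γ)) F̄ Σw F̄' = S}. Then (S*, F*) ∈ 𝒮, and for every (S, F) ∈ 𝒮 one has tr(Λ S) ≥ tr(Λ S*), with equality if and only if S = S* and F = F*; in particular, (S*, F*) is the unique minimizer of tr(Λ S) over 𝒮. -/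
open Matrix MeasureTheory Filter
open scoped ENNReal

open scoped MatrixOrder in
lemma aux_factor {ι : Type*} [Fintype ι] [DecidableEq ι] {M : Matrix ι ι ℝ}
    (hM : M.PosSemidef) : ∃ L : Matrix ι ι ℝ, M = Lᵀ * L := by
  obtain ⟨L, hL⟩ := CStarAlgebra.nonneg_iff_eq_star_mul_self.mp hM.nonneg
  exact ⟨L, by rw [hL, star_eq_conjTranspose, conjTranspose_eq_transpose_of_trivial]⟩

lemma aux_trace {ι κ : Type*} [Fintype ι] [DecidableEq ι] [Fintype κ] [DecidableEq κ]
    {H : Matrix κ κ ℝ} {M : Matrix ι ι ℝ} (hH : H.PosDef) (hM : M.PosDef) (D : Matrix κ ι ℝ) :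
    0 ≤ (Dᵀ * H * D * M).trace ∧ ((Dᵀ * H * D * M).trace = 0 → D = 0) := by
  obtain ⟨K, hK⟩ := aux_factor hH.posSemidef
  obtain ⟨L, hL⟩ := aux_factor hM.posSemidef
  have e : (Dᵀ * H * D * M).trace = ((K * D * Lᵀ)ᴴ * (K * D * Lᵀ)).trace := by
    rw [conjTranspose_eq_transpose_of_trivial, hK, hL, ← Matrix.mul_assoc, Matrix.trace_mul_comm]
    simp only [Matrix.transpose_mul, Matrix.transpose_transpose, Matrix.mul_assoc]
  rw [e]
  refine ⟨(posSemidef_conjTranspose_mul_self _).trace_nonneg, fun h => ?_⟩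
  rw [trace_conjTranspose_mul_self_eq_zero_iff] at h
  have h2 : H * D * M = 0 := by
    rw [hK, hL]
    calc Kᵀ * K * D * (Lᵀ * L) = Kᵀ * (K * D * Lᵀ) * L := by simp only [Matrix.mul_assoc]
      _ = 0 := by rw [h]; simp
  have hHd := (Matrix.isUnit_iff_isUnit_det _).1 hH.isUnit
  have hMd := (Matrix.isUnit_iff_isUnit_det _).1 hM.isUnit
  calc D = H⁻¹ * (H * D * M) * M⁻¹ := by
        rw [← Matrix.mul_assoc, Matrix.mul_nonsing_inv_cancel_right _ _ hMd,
          Matrix.nonsing_inv_mul_cancel_left _ _ hHd]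
    _ = 0 := by rw [h2]; simp

/-- Quadratic-form inequality for Lyapunov uniqueness. -/
lemma aux_lyap_le {ι : Type*} [Fintype ι] [DecidableEq ι] {M S W D : Matrix ι ι ℝ} {γ : ℝ}
    (hγ : 0 < γ) (hS : S.PosDef) (hW : W.PosDef)
    (hSe : γ • (M * S * Mᵀ) + W = S) (hD : γ • (M * D * Mᵀ) = D) (v : ι → ℝ) :
    v ⬝ᵥ (D *ᵥ v) ≤ 0 := by
  have key : ∀ (Y : Matrix ι ι ℝ) (u : ι → ℝ),
      u ⬝ᵥ ((γ • (M * Y * Mᵀ)) *ᵥ u) = γ * ((Mᵀ *ᵥ u) ⬝ᵥ (Y *ᵥ (Mᵀ *ᵥ u))) := by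
    intro Y u
    rw [Matrix.smul_mulVec, dotProduct_smul, smul_eq_mul, ← Matrix.mulVec_mulVec,
      ← Matrix.mulVec_mulVec, Matrix.dotProduct_mulVec, ← Matrix.mulVec_transpose]
  have hSp : ∀ u : ι → ℝ, u ≠ 0 → 0 < u ⬝ᵥ (S *ᵥ u) := fun u hu => by
    simpa using hS.dotProduct_mulVec_pos hu
  have hWp : ∀ u : ι → ℝ, u ≠ 0 → 0 < u ⬝ᵥ (W *ᵥ u) := fun u hu => by
    simpa using hW.dotProduct_mulVec_pos hu
  by_cases hv : v = 0
  · simp [hv]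
  have hne : (Metric.sphere (0 : ι → ℝ) 1).Nonempty :=
    ⟨‖v‖⁻¹ • v, by simp [norm_smul, hv]⟩
  have hc : ContinuousOn (fun u : ι → ℝ => (u ⬝ᵥ (D *ᵥ u)) / (u ⬝ᵥ (S *ᵥ u)))
      (Metric.sphere (0 : ι → ℝ) 1) := by
    apply ContinuousOn.div
    · exact (Continuous.dotProduct continuous_id
        (Continuous.matrix_mulVec continuous_const continuous_id)).continuousOn
    · exact (Continuous.dotProduct continuous_id
        (Continuous.matrix_mulVec continuous_const continuous_id)).continuousOn
    · intro u hu
      exact (hSp u (by rintro rfl; simp at hu)).ne'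
  obtain ⟨w, hw, hmax⟩ := (isCompact_sphere (0 : ι → ℝ) 1).exists_isMaxOn hne hc
  have hw0 : w ≠ 0 := by rintro rfl; simp at hw
  set k := (w ⬝ᵥ (D *ᵥ w)) / (w ⬝ᵥ (S *ᵥ w)) with hk
  have hall : ∀ u : ι → ℝ, u ⬝ᵥ (D *ᵥ u) ≤ k * (u ⬝ᵥ (S *ᵥ u)) := by
    intro u
    by_cases hu : u = 0
    · simp [hu]
    have h1 := hmax (show ‖u‖⁻¹ • u ∈ Metric.sphere (0 : ι → ℝ) 1 by simp [norm_smul, hu])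
    have hn : ‖u‖⁻¹ ≠ 0 := inv_ne_zero (norm_ne_zero_iff.2 hu)
    simp only [Set.mem_setOf_eq, Matrix.mulVec_smul, dotProduct_smul, smul_dotProduct,
      smul_eq_mul] at h1
    rw [mul_div_mul_left _ _ hn, mul_div_mul_left _ _ hn] at h1
    exact (div_le_iff₀ (hSp u hu)).1 h1
  have hkw : w ⬝ᵥ (D *ᵥ w) = k * (w ⬝ᵥ (S *ᵥ w)) := by
    rw [hk, div_mul_cancel₀ _ (hSp w hw0).ne']
  have hk0 : k ≤ 0 := by
    by_contra hpos
    push Not at hpos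
    have e1 : w ⬝ᵥ (D *ᵥ w) = γ * ((Mᵀ *ᵥ w) ⬝ᵥ (D *ᵥ (Mᵀ *ᵥ w))) := by
      rw [← key D w, hD]
    have e2 : w ⬝ᵥ (S *ᵥ w) = γ * ((Mᵀ *ᵥ w) ⬝ᵥ (S *ᵥ (Mᵀ *ᵥ w))) + w ⬝ᵥ (W *ᵥ w) := by
      rw [← key S w, ← dotProduct_add, ← Matrix.add_mulVec, hSe]
    have h3 := mul_le_mul_of_nonneg_left (hall (Mᵀ *ᵥ w)) hγ.le
    have h4 := mul_pos hpos (hWp w hw0)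
    rw [← e1, hkw, e2] at h3
    linarith
  exact (hall v).trans (mul_nonpos_of_nonpos_of_nonneg hk0 (hSp v hv).le)

lemma aux_lyap_s14 {ι : Type*} [Fintype ι] [DecidableEq ι] {M S T W : Matrix ι ι ℝ} {γ : ℝ}
    (hγ : 0 < γ) (hS : S.PosDef) (hT : T.PosDef) (hW : W.PosDef)
    (hSe : γ • (M * S * Mᵀ) + W = S) (hTe : γ • (M * T * Mᵀ) + W = T) : T = S := by
  have h1 : γ • (M * (T - S) * Mᵀ) = T - S := by
    nth_rw 2 [← hTe, ← hSe]
    rw [Matrix.mul_sub, Matrix.sub_mul, smul_sub]; abel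
  have h2 : γ • (M * (S - T) * Mᵀ) = S - T := by
    nth_rw 2 [← hTe, ← hSe]
    rw [Matrix.mul_sub, Matrix.sub_mul, smul_sub]; abel
  have a1 : (T - S).PosSemidef := by
    refine PosSemidef.of_dotProduct_mulVec_nonneg (hT.1.sub hS.1) fun x => ?_
    have := aux_lyap_le hγ hS hW hSe h2 x
    rw [← neg_sub T S, Matrix.neg_mulVec, dotProduct_neg] at this
    simpa using this
  have a2 : (T - S).trace = 0 := by
    refine le_antisymm ?_ a1.trace_nonneg
    refine Finset.sum_nonpos fun i _ => ?_
    have := aux_lyap_le hγ hS hW hSe h1 (Pi.single i 1)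
    simpa using this
  obtain ⟨L, hL⟩ := aux_factor a1
  have : L = 0 := by
    rw [← trace_conjTranspose_mul_self_eq_zero_iff, conjTranspose_eq_transpose_of_trivial, ← hL, a2]
  rw [this] at hL
  simpa [sub_eq_zero] using hL

lemma aux_sq {n m : ℕ} {A : Matrix (Fin n) (Fin n) ℝ} {B : Matrix (Fin n) (Fin m) ℝ}
    {Q : Matrix (Fin n) (Fin n) ℝ} {R : Matrix (Fin m) (Fin m) ℝ} {γ : ℝ}
    {X : Matrix (Fin n) (Fin n) ℝ} (hX : X.PosSemidef) 
    (hARE : IsAREsol A B Q R γ X) (hH : (R + γ • (Bᵀ * X * B)).PosDef)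
    (F : Matrix (Fin m) (Fin n) ℝ) :
    (extendF F)ᵀ * Pmat A B Q R γ X * extendF F = X +
      (F - gainF A B R γ X)ᵀ * (R + γ • (Bᵀ * X * B)) * (F - gainF A B R γ X) := by
  have hXt : Xᵀ = X := by simpa using hX.1.eq
  have hHt : (R + γ • (Bᵀ * X * B))ᵀ = R + γ • (Bᵀ * X * B) := by simpa using hH.1.eq
  have hHd := (Matrix.isUnit_iff_isUnit_det _).1 hH.isUnit
  unfold IsAREsol at hARE
  have g1 : (R + γ • (Bᵀ * X * B)) * gainF A B R γ X = -(γ • (Bᵀ * X * A)) := by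
    unfold gainF
    rw [Matrix.mul_neg, Matrix.mul_smul, Matrix.mul_nonsing_inv_cancel_left _ _ hHd]
  have g2 : (gainF A B R γ X)ᵀ * (R + γ • (Bᵀ * X * B)) = -(γ • (Aᵀ * X * B)) := by
    have := congrArg Matrix.transpose g1
    rw [Matrix.transpose_mul, hHt] at this
    rw [this]
    simp [Matrix.transpose_mul, hXt, Matrix.mul_assoc]
  have g3 : (γ ^ 2) • (Aᵀ * X * B * (R + γ • (Bᵀ * X * B))⁻¹ * (Bᵀ * X * A))
      = -((γ • (Aᵀ * X * B)) * gainF A B R γ X) := by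
    unfold gainF
    rw [Matrix.mul_neg, neg_neg, Matrix.mul_smul, Matrix.smul_mul, smul_smul, Matrix.mul_assoc, pow_two]
  rw [g3] at hARE
  have e1 : (extendF F)ᵀ * Pmat A B Q R γ X * extendF F =
      (Q + γ • (Aᵀ * X * A)) + Fᵀ * (γ • (Bᵀ * X * A)) + (γ • (Aᵀ * X * B)) * F
        + Fᵀ * (R + γ • (Bᵀ * X * B)) * F := by
    unfold extendF Pmat
    rw [transpose_fromRows, fromCols_mul_fromBlocks, fromCols_mul_fromRows]
    simp only [Matrix.transpose_one, Matrix.one_mul, Matrix.mul_one, Matrix.add_mul]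
    abel
  rw [e1]
  generalize gainF A B R γ X = K at *
  generalize R + γ • (Bᵀ * X * B) = H at *
  rw [Matrix.transpose_sub, Matrix.sub_mul, g2, Matrix.mul_sub, Matrix.sub_mul, Matrix.sub_mul, 
    Matrix.mul_assoc Fᵀ H K, g1]
  nth_rw 4 [hARE]
  simp only [Matrix.mul_neg, Matrix.neg_mul]
  abel

lemma aux_val {n m : ℕ} {A : Matrix (Fin n) (Fin n) ℝ} {B : Matrix (Fin n) (Fin m) ℝ}
    {Q : Matrix (Fin n) (Fin n) ℝ} {R : Matrix (Fin m) (Fin m) ℝ} {γ c : ℝ}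
    {X Sw : Matrix (Fin n) (Fin n) ℝ} (hX : X.PosSemidef) 
    (hARE : IsAREsol A B Q R γ X) (hH : (R + γ • (Bᵀ * X * B)).PosDef)
    (F : Matrix (Fin m) (Fin n) ℝ) {S Γ : Matrix (Fin n ⊕ Fin m) (Fin n ⊕ Fin m) ℝ}
    (hS : γ • (blockAF A B F * S * (blockAF A B F)ᵀ) + Γ
            + c • (extendF F * Sw * (extendF F)ᵀ) = S) :
    (blockLam Q R * S).trace = (Pmat A B Q R γ X * Γ).trace + c * (X * Sw).trace +
      ((F - gainF A B R γ X)ᵀ * (R + γ • (Bᵀ * X * B)) * (F - gainF A B R γ X) *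
        (γ • (fromCols A B * S * (fromCols A B)ᵀ) + c • Sw)).trace := by
  have hAF : blockAF A B F = extendF F * fromCols A B := by
    unfold blockAF extendF
    rw [fromRows_mul_fromCols]; simp
  have hP : blockLam Q R = Pmat A B Q R γ X - γ • ((fromCols A B)ᵀ * X * fromCols A B) := by
    unfold blockLam Pmat
    rw [transpose_fromCols, fromRows_mul, fromRows_mul_fromCols]
    ext (i | i) (j | j) <;> simp
  set G := fromCols A B
  set M := γ • (G * S * Gᵀ) + c • Sw with hM
  have hS2 : S = Γ + extendF F * M * (extendF F)ᵀ := by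
    conv_lhs => rw [← hS, hAF]
    rw [hM]
    simp only [Matrix.transpose_mul, Matrix.mul_add, Matrix.add_mul, Matrix.mul_smul,
      Matrix.smul_mul, Matrix.mul_assoc]
    abel
  have hD := aux_sq hX hARE hH F
  have t1 : (Pmat A B Q R γ X * S).trace = (Pmat A B Q R γ X * Γ).trace +
      ((extendF F)ᵀ * Pmat A B Q R γ X * extendF F * M).trace := by
    conv_lhs => rw [hS2]
    rw [Matrix.mul_add, Matrix.trace_add, ← Matrix.mul_assoc, Matrix.trace_mul_comm _ (extendF F)ᵀ]
    simp only [Matrix.mul_assoc]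
  have t2 : (γ • (Gᵀ * X * G) * S).trace = (X * M).trace - c * (X * Sw).trace := by
    rw [hM, Matrix.mul_add, Matrix.trace_add, Matrix.mul_smul, Matrix.mul_smul, Matrix.smul_mul,
      Matrix.trace_smul, Matrix.trace_smul, Matrix.trace_smul, smul_eq_mul, smul_eq_mul,
      Matrix.mul_assoc, Matrix.mul_assoc, Matrix.trace_mul_comm Gᵀ]
    simp only [Matrix.mul_assoc, smul_eq_mul]
    ring
  rw [hP, Matrix.sub_mul, Matrix.trace_sub, t1, t2, hD, Matrix.add_mul, Matrix.trace_add]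
  ring

theorem primal_problem_unique_minimizer (n m : ℕ) (hn : 0 < n) (hm : 0 < m)
    (A : Matrix (Fin n) (Fin n) ℝ) (B : Matrix (Fin n) (Fin m) ℝ)
    (Q : Matrix (Fin n) (Fin n) ℝ) (R : Matrix (Fin m) (Fin m) ℝ)
    (hQ : Q.PosSemidef) (hR : R.PosDef)
    (γ : ℝ) (hγ0 : 0 < γ) (hγ1 : γ < 1)
    (Sw : Matrix (Fin n) (Fin n) ℝ) (hSw : Sw.PosDef)
    (Γ : Matrix (Fin n ⊕ Fin m) (Fin n ⊕ Fin m) ℝ) (hΓ : Γ.PosDef)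
    (Xstar : Matrix (Fin n) (Fin n) ℝ) (hXstar : Xstar.PosSemidef)
    (hARE : IsAREsol A B Q R γ Xstar)
    (hXuniq : ∀ Y : Matrix (Fin n) (Fin n) ℝ,
      Y.PosSemidef → IsAREsol A B Q R γ Y → Y = Xstar)
    (hstab : specRad (A + B * gainF A B R γ Xstar) < 1)
    (Sstar : Matrix (Fin n ⊕ Fin m) (Fin n ⊕ Fin m) ℝ) (hSstar : Sstar.PosDef)
    (hSstareq : γ • (blockAF A B (gainF A B R γ Xstar) * Sstar
          * (blockAF A B (gainF A B R γ Xstar))ᵀ) + Γ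
        + (γ / (1 - γ)) • (extendF (gainF A B R γ Xstar) * Sw
          * (extendF (gainF A B R γ Xstar))ᵀ) = Sstar) :
    (Sstar.PosDef ∧
      γ • (blockAF A B (gainF A B R γ Xstar) * Sstar
          * (blockAF A B (gainF A B R γ Xstar))ᵀ) + Γ
        + (γ / (1 - γ)) • (extendF (gainF A B R γ Xstar) * Sw
          * (extendF (gainF A B R γ Xstar))ᵀ) = Sstar)
    ∧ ∀ (S : Matrix (Fin n ⊕ Fin m) (Fin n ⊕ Fin m) ℝ)
        (F : Matrix (Fin m) (Fin n) ℝ),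
        S.PosDef →
        γ • (blockAF A B F * S * (blockAF A B F)ᵀ) + Γ
            + (γ / (1 - γ)) • (extendF F * Sw * (extendF F)ᵀ) = S →
        (blockLam Q R * Sstar).trace ≤ (blockLam Q R * S).trace
          ∧ ((blockLam Q R * S).trace = (blockLam Q R * Sstar).trace
              ↔ S = Sstar ∧ F = gainF A B R γ Xstar) := by
  refine ⟨⟨hSstar, hSstareq⟩, fun S F hS hSe => ?_⟩
  have hH : (R + γ • (Bᵀ * Xstar * B)).PosDef := by
    refine hR.add_posSemidef (PosSemidef.smul ?_ hγ0.le)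
    simpa using hXstar.conjTranspose_mul_mul_same B
  have hc : 0 < γ / (1 - γ) := div_pos hγ0 (by linarith)
  have v1 := aux_val hXstar hARE hH F hSe
  have v2 := aux_val hXstar hARE hH _ hSstareq
  simp only [sub_self, Matrix.transpose_zero, Matrix.zero_mul, Matrix.trace_zero, add_zero] at v2
  have hM : (γ • (fromCols A B * S * (fromCols A B)ᵀ) + (γ / (1 - γ)) • Sw).PosDef := by
    refine PosDef.posSemidef_add (PosSemidef.smul ?_ hγ0.le) (hSw.smul hc)
    simpa using hS.posSemidef.mul_mul_conjTranspose_same (fromCols A B)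
  obtain ⟨p1, p2⟩ := aux_trace hH hM (F - gainF A B R γ Xstar)
  refine ⟨by linarith, fun h => ?_, fun h => by rw [h.1]⟩
  have hF : F = gainF A B R γ Xstar := sub_eq_zero.1 (p2 (by linarith))
  refine ⟨?_, hF⟩
  rw [hF, add_assoc] at hSe
  rw [add_assoc] at hSstareq
  refine aux_lyap_s14 hγ0 hSstar hS (hΓ.add_posSemidef (PosSemidef.smul ?_ hc.le)) hSstareq hSe
  simpa using hSw.posSemidef.mul_mul_conjTranspose_same (extendF (gainF A B R γ Xstar))
end

section
/- Assume the discounted ARE has a unique symmetric positive semidefinite solution X* with stabilizing gain F* := −γ(R + γB'X*B)⁻¹B'X*A satisfying ρ(A + BF*) < 1, define P* := [[Q + γA'X*A, γA'X*B], [γB'X*A, R + γB'X*B]], and let S* be the unique symmetric positive definite solution of γ A_{F*} S A_{F*}' + Γ + (γ/(1−γ)) F̄* Σw (F̄*)' = S. Consider the feasible set 𝒯 := {(P, F) : P ∈ ℝ^{(n+m)×(n+m)} symmetric, F ∈ ℝ^{m×n} with ρ(A + BF) < 1, and γ A_F' P A_F + Λ = P}. Then (P*, F*) ∈ 𝒯,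 and for every (P, F) ∈ 𝒯 one has tr((Γ + (γ/(1−γ)) F̄ Σw F̄') P) ≥ tr((Γ + (γ/(1−γ)) F̄* Σw (F̄*)') P*), with equality if and only if P = P* and F = F*; moreover the optimal value equals tr(Λ S*). -/
open Matrix MeasureTheory Filter
open scoped ENNReal

section helpers

attribute [local instance] Matrix.linftyOpNormedRing Matrix.linftyOpNormedAlgebra in
theorem aux_pow_tendsto {n : ℕ} (M : Matrix (Fin n) (Fin n) ℝ) (h : specRad M < 1) (i j : Fin n) :
    Tendsto (fun k : ℕ => (M ^ k) i j) atTop (nhds 0) := by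
  have hn : Nonempty (Fin n) := ⟨i⟩
  set C : Matrix (Fin n) (Fin n) ℂ := M.map Complex.ofReal with hC
  have hg := spectrum.pow_nnnorm_pow_one_div_tendsto_nhds_spectralRadius C
  obtain ⟨r, hr1, hr2⟩ := exists_between h
  have hrt : r ≠ ⊤ := ne_top_of_lt hr2
  lift r to NNReal using hrt
  have hr2' : r < 1 := by exact_mod_cast hr2
  have hev := hg.eventually_lt_const hr1
  have hb : ∀ᶠ k : ℕ in atTop, ‖(M ^ k) i j‖ ≤ (r : ℝ) ^ k := by
    filter_upwards [hev, eventually_gt_atTop 0] with k hk hk0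
    have hk0' : (0 : ℝ) < k := by exact_mod_cast hk0
    have h1 : (‖C ^ k‖₊ : ℝ≥0∞) ≤ (r : ℝ≥0∞) ^ k := by
      have := ENNReal.rpow_le_rpow hk.le hk0'.le
      rw [← ENNReal.rpow_mul, one_div, inv_mul_cancel₀ hk0'.ne', ENNReal.rpow_one,
        ENNReal.rpow_natCast] at this
      exact this
    have h2 : ‖C ^ k‖₊ ≤ r ^ k := by exact_mod_cast h1
    have h3 : ‖(C ^ k) i j‖₊ ≤ ‖C ^ k‖₊ := by
      rw [Matrix.linfty_opNNNorm_def]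
      refine le_trans ?_ (Finset.le_sup (f := fun i => ∑ j, ‖(C ^ k) i j‖₊) (Finset.mem_univ i))
      exact Finset.single_le_sum (f := fun j => ‖(C ^ k) i j‖₊) (fun _ _ => zero_le) (Finset.mem_univ j)
    have h4 : (C ^ k) i j = (((M ^ k) i j : ℝ) : ℂ) := by
      have : C ^ k = (M ^ k).map Complex.ofReal := by
        have := map_pow (Complex.ofRealHom.mapMatrix (m := Fin n)) M k
        exact this.symm
      rw [this]; rfl
    have h5 := h3.trans h2
    rw [h4] at h5
    have h6 : ‖(((M ^ k) i j : ℝ) : ℂ)‖ ≤ (r : ℝ) ^ k := by exact_mod_cast h5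
    rwa [Complex.norm_real] at h6
  refine squeeze_zero_norm' hb ?_
  exact tendsto_pow_atTop_nhds_zero_of_lt_one r.2 (by exact_mod_cast hr2')

theorem aux_lyap_s15 {n : ℕ} (M D N : Matrix (Fin n) (Fin n) ℝ) (γ : ℝ) (h0 : 0 < γ) (h1 : γ < 1)
    (h : specRad M < 1) (hD : Dᵀ = D) (hN : N.PosSemidef) (he : D = γ • (Mᵀ * D * M) + N) :
    D.PosSemidef := by
  refine PosSemidef.of_dotProduct_mulVec_nonneg (by rw [IsHermitian, conjTranspose_eq_transpose_of_trivial, hD]) ?_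
  intro x
  rw [star_trivial]
  have key : ∀ k : ℕ, γ ^ k * (((M ^ k) *ᵥ x) ⬝ᵥ (D *ᵥ ((M ^ k) *ᵥ x))) ≤ x ⬝ᵥ (D *ᵥ x) := by
    intro k
    induction k with
    | zero => simp
    | succ k ih =>
      refine le_trans ?_ ih
      set y := (M ^ k) *ᵥ x with hy
      have e1 : (M ^ (k+1)) *ᵥ x = M *ᵥ y := by rw [hy, mulVec_mulVec, pow_succ']
      have e2 : y ⬝ᵥ (D *ᵥ y) = γ * ((M *ᵥ y) ⬝ᵥ (D *ᵥ (M *ᵥ y))) + y ⬝ᵥ (N *ᵥ y) := by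
        conv_lhs => rw [he]
        rw [add_mulVec, dotProduct_add, smul_mulVec, dotProduct_smul, smul_eq_mul,
          ← mulVec_mulVec, ← mulVec_mulVec, dotProduct_mulVec y Mᵀ, vecMul_transpose]
      have e3 : 0 ≤ y ⬝ᵥ (N *ᵥ y) := by simpa using hN.dotProduct_mulVec_nonneg y
      rw [e1, e2, pow_succ, mul_assoc]
      exact mul_le_mul_of_nonneg_left (by linarith) (by positivity)
  have ht : Tendsto (fun k : ℕ => γ ^ k * (((M ^ k) *ᵥ x) ⬝ᵥ (D *ᵥ ((M ^ k) *ᵥ x)))) atTop (nhds (0 * ((0 : Fin n → ℝ) ⬝ᵥ (D *ᵥ (0 : Fin n → ℝ))))) := by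
    have hM : Tendsto (fun k : ℕ => M ^ k) atTop (nhds (0 : Matrix (Fin n) (Fin n) ℝ)) := by
      refine tendsto_pi_nhds.2 fun i => tendsto_pi_nhds.2 fun j => aux_pow_tendsto M h i j
    have hx : Tendsto (fun k : ℕ => (M ^ k) *ᵥ x) atTop (nhds 0) := by
      have hc : Continuous (fun T : Matrix (Fin n) (Fin n) ℝ => T *ᵥ x) := by fun_prop
      have := (hc.tendsto 0).comp hM
      simp only [zero_mulVec] at this
      exact this
    refine (tendsto_pow_atTop_nhds_zero_of_lt_one h0.le h1).mul ?_
    have hc : Continuous (fun y : Fin n → ℝ => y ⬝ᵥ (D *ᵥ y)) := by fun_prop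
    exact (hc.tendsto 0).comp hx
  rw [zero_mul] at ht
  exact le_of_tendsto' ht key

open scoped MatrixOrder in
theorem aux_psd_fac {ι : Type*} [Fintype ι] [DecidableEq ι] (D : Matrix ι ι ℝ) (hD : D.PosSemidef) :
    ∃ C : Matrix ι ι ℝ, D = Cᵀ * C := by
  obtain ⟨C, hC⟩ := CStarAlgebra.nonneg_iff_eq_star_mul_self.mp hD.nonneg
  exact ⟨C, by rw [hC, star_eq_conjTranspose, conjTranspose_eq_transpose_of_trivial]⟩

theorem aux_trace_nonneg {ι : Type*} [Fintype ι] [DecidableEq ι] (S D : Matrix ι ι ℝ)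
    (hS : S.PosSemidef) (hD : D.PosSemidef) : 0 ≤ (S * D).trace := by
  obtain ⟨C, rfl⟩ := aux_psd_fac D hD
  rw [← Matrix.mul_assoc, trace_mul_comm, ← Matrix.mul_assoc]
  have := (hS.mul_mul_conjTranspose_same C).trace_nonneg
  simpa using this

theorem aux_conj_zero {ι κ : Type*} [Fintype ι] [Fintype κ] [DecidableEq ι] [DecidableEq κ]
    (S : Matrix ι ι ℝ) (C : Matrix ι κ ℝ)
    (hS : S.PosDef) (h : Cᵀ * S * C = 0) : C = 0 := by
  refine Matrix.ext_of_mulVec_single fun j => ?_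
  rw [zero_mulVec]
  by_contra hne
  have h1 := hS.dotProduct_mulVec_pos hne
  have h2 : (C *ᵥ Pi.single j 1) ⬝ᵥ (S *ᵥ (C *ᵥ Pi.single j 1))
      = Pi.single j 1 ⬝ᵥ ((Cᵀ * S * C) *ᵥ Pi.single j 1) := by
    rw [← mulVec_mulVec, ← mulVec_mulVec, dotProduct_mulVec _ Cᵀ, vecMul_transpose]
  rw [star_trivial, h2, h] at h1
  simp at h1

theorem aux_trace_zero {ι : Type*} [Fintype ι] [DecidableEq ι] (S D : Matrix ι ι ℝ)
    (hS : S.PosDef) (hD : D.PosSemidef) (h : (S * D).trace = 0) : D = 0 := by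
  obtain ⟨C, rfl⟩ := aux_psd_fac D hD
  rw [← Matrix.mul_assoc, trace_mul_comm, ← Matrix.mul_assoc] at h
  have h2 := (hS.posSemidef.mul_mul_conjTranspose_same C)
  rw [conjTranspose_eq_transpose_of_trivial] at h2
  have h3 := h2.trace_eq_zero_iff.1 h
  have h4 := aux_conj_zero S Cᵀ hS (by simpa using h3)
  rw [h4]; simp

variable {n m : ℕ} (A : Matrix (Fin n) (Fin n) ℝ) (B : Matrix (Fin n) (Fin m) ℝ)
    (Q : Matrix (Fin n) (Fin n) ℝ) (R : Matrix (Fin m) (Fin m) ℝ) (γ : ℝ)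
    (X : Matrix (Fin n) (Fin n) ℝ) (F : Matrix (Fin m) (Fin n) ℝ)

theorem aux_blockAF : blockAF A B F = extendF F * fromCols A B := by
  rw [blockAF, extendF, fromRows_mul_fromCols]; simp

theorem aux_Pmat : Pmat A B Q R γ X = blockLam Q R + γ • ((fromCols A B)ᵀ * X * fromCols A B) := by
  rw [Pmat, blockLam, transpose_fromCols, fromRows_mul, fromRows_mul_fromCols, fromBlocks_smul,
    fromBlocks_add]
  simp

theorem aux_GE : fromCols A B * extendF F = A + B * F := by
  rw [extendF, fromCols_mul_fromRows]; simp

theorem aux_EPE : (extendF F)ᵀ * Pmat A B Q R γ X * extendF F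
    = Q + γ • (Aᵀ * X * A) + γ • (Aᵀ * X * B) * F + Fᵀ * (γ • (Bᵀ * X * A))
      + Fᵀ * (R + γ • (Bᵀ * X * B)) * F := by
  rw [extendF, Pmat, transpose_fromRows, Matrix.mul_assoc, fromBlocks_mul_fromRows,
    fromCols_mul_fromRows]
  simp only [transpose_one, Matrix.one_mul, Matrix.mul_one, Matrix.mul_add, Matrix.add_mul, Matrix.mul_assoc]
  abel

theorem aux_square (hX : Xᵀ = X) (hR : Rᵀ = R) (hH : IsUnit (R + γ • (Bᵀ * X * B)))
    (hARE : IsAREsol A B Q R γ X) :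
    (extendF F)ᵀ * Pmat A B Q R γ X * extendF F
      = X + (F - gainF A B R γ X)ᵀ * (R + γ • (Bᵀ * X * B)) * (F - gainF A B R γ X) := by
  rw [aux_EPE]
  set H := R + γ • (Bᵀ * X * B) with hHd
  set K := gainF A B R γ X with hK
  have hHt : Hᵀ = H := by
    rw [hHd]; simp [hR, hX, Matrix.mul_assoc]
  have hdet : IsUnit H.det := (Matrix.isUnit_iff_isUnit_det _).1 hH
  have h1 : γ • (Bᵀ * X * A) = -(H * K) := by
    rw [hK, gainF, ← hHd, Matrix.mul_neg, neg_neg, Matrix.mul_smul, Matrix.mul_nonsing_inv_cancel_left _ _ hdet]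
  have h2 : γ • (Aᵀ * X * B) = -(Kᵀ * H) := by
    have := congrArg transpose h1
    simpa [hHt, hX, Matrix.mul_assoc] using this
  have h3 : X = Q + γ • (Aᵀ * X * A) - Kᵀ * H * K := by
    have e : (γ ^ 2) • (Aᵀ * X * B * H⁻¹ * (Bᵀ * X * A)) = Kᵀ * H * K := by
      have : (γ ^ 2) • (Aᵀ * X * B * H⁻¹ * (Bᵀ * X * A))
          = (γ • (Aᵀ * X * B)) * H⁻¹ * (γ • (Bᵀ * X * A)) := by
        simp [smul_smul, pow_two]
      rw [this, h1, h2]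
      simp only [Matrix.neg_mul, Matrix.mul_neg, neg_neg]
      rw [Matrix.mul_nonsing_inv_cancel_right _ _ hdet, Matrix.mul_assoc]
    rw [← e]; exact hARE
  have h4 : Q + γ • (Aᵀ * X * A) = X + Kᵀ * H * K := by
    rw [eq_sub_iff_add_eq] at h3; exact h3.symm
  rw [h4, h1, h2, transpose_sub]
  simp only [Matrix.sub_mul, Matrix.mul_sub, Matrix.neg_mul, Matrix.mul_neg, Matrix.mul_assoc]
  abel

theorem aux_feas (P : Matrix (Fin n ⊕ Fin m) (Fin n ⊕ Fin m) ℝ) :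
    γ • ((blockAF A B F)ᵀ * P * blockAF A B F) + blockLam Q R
      = Pmat A B Q R γ ((extendF F)ᵀ * P * extendF F) := by
  rw [aux_Pmat, aux_blockAF, transpose_mul, add_comm]
  simp only [Matrix.mul_assoc]

theorem aux_obj (Γ P : Matrix (Fin n ⊕ Fin m) (Fin n ⊕ Fin m) ℝ) (c : ℝ)
    (Sw : Matrix (Fin n) (Fin n) ℝ) :
    ((Γ + c • (extendF F * Sw * (extendF F)ᵀ)) * P).trace
      = (Γ * P).trace + c * (Sw * ((extendF F)ᵀ * P * extendF F)).trace := by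
  rw [Matrix.add_mul, trace_add, Matrix.smul_mul, trace_smul, smul_eq_mul]
  congr 2
  rw [Matrix.mul_assoc, Matrix.mul_assoc, trace_mul_comm]
  simp only [Matrix.mul_assoc]

end helpers

theorem dual_problem_unique_minimizer (n m : ℕ) (hn : 0 < n) (hm : 0 < m)
    (A : Matrix (Fin n) (Fin n) ℝ) (B : Matrix (Fin n) (Fin m) ℝ)
    (Q : Matrix (Fin n) (Fin n) ℝ) (R : Matrix (Fin m) (Fin m) ℝ)
    (hQ : Q.PosSemidef) (hR : R.PosDef)
    (γ : ℝ) (hγ0 : 0 < γ) (hγ1 : γ < 1)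
    (Sw : Matrix (Fin n) (Fin n) ℝ) (hSw : Sw.PosDef)
    (Γ : Matrix (Fin n ⊕ Fin m) (Fin n ⊕ Fin m) ℝ) (hΓ : Γ.PosDef)
    (Xstar : Matrix (Fin n) (Fin n) ℝ) (hXstar : Xstar.PosSemidef)
    (hARE : IsAREsol A B Q R γ Xstar)
    (hXuniq : ∀ Y : Matrix (Fin n) (Fin n) ℝ,
      Y.PosSemidef → IsAREsol A B Q R γ Y → Y = Xstar)
    (hstab : specRad (A + B * gainF A B R γ Xstar) < 1)
    (Sstar : Matrix (Fin n ⊕ Fin m) (Fin n ⊕ Fin m) ℝ) (hSstar : Sstar.PosDef)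
    (hSstareq : γ • (blockAF A B (gainF A B R γ Xstar) * Sstar
          * (blockAF A B (gainF A B R γ Xstar))ᵀ) + Γ
        + (γ / (1 - γ)) • (extendF (gainF A B R γ Xstar) * Sw
          * (extendF (gainF A B R γ Xstar))ᵀ) = Sstar) :
    (γ • ((blockAF A B (gainF A B R γ Xstar))ᵀ * Pmat A B Q R γ Xstar
          * blockAF A B (gainF A B R γ Xstar)) + blockLam Q R = Pmat A B Q R γ Xstar)
    ∧ (∀ (P : Matrix (Fin n ⊕ Fin m) (Fin n ⊕ Fin m) ℝ)
        (F : Matrix (Fin m) (Fin n) ℝ),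
        P.IsSymm → specRad (A + B * F) < 1 →
        γ • ((blockAF A B F)ᵀ * P * blockAF A B F) + blockLam Q R = P →
        ((Γ + (γ / (1 - γ)) • (extendF (gainF A B R γ Xstar) * Sw
              * (extendF (gainF A B R γ Xstar))ᵀ)) * Pmat A B Q R γ Xstar).trace
            ≤ ((Γ + (γ / (1 - γ)) • (extendF F * Sw * (extendF F)ᵀ)) * P).trace
          ∧ (((Γ + (γ / (1 - γ)) • (extendF F * Sw * (extendF F)ᵀ)) * P).trace
              = ((Γ + (γ / (1 - γ)) • (extendF (gainF A B R γ Xstar) * Sw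
                  * (extendF (gainF A B R γ Xstar))ᵀ)) * Pmat A B Q R γ Xstar).trace
              ↔ P = Pmat A B Q R γ Xstar ∧ F = gainF A B R γ Xstar))
    ∧ ((Γ + (γ / (1 - γ)) • (extendF (gainF A B R γ Xstar) * Sw
          * (extendF (gainF A B R γ Xstar))ᵀ)) * Pmat A B Q R γ Xstar).trace
        = (blockLam Q R * Sstar).trace := by
  have hXt : Xstarᵀ = Xstar := by
    have := hXstar.isHermitian
    rwa [IsHermitian, conjTranspose_eq_transpose_of_trivial] at this
  have hRt : Rᵀ = R := by
    have := hR.isHermitian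
    rwa [IsHermitian, conjTranspose_eq_transpose_of_trivial] at this
  have hH : (R + γ • (Bᵀ * Xstar * B)).PosDef := by
    refine hR.add_posSemidef (PosSemidef.smul ?_ hγ0.le)
    simpa using hXstar.conjTranspose_mul_mul_same B
  have hsq := fun F => aux_square A B Q R γ Xstar F hXt hRt hH.isUnit hARE
  set K := gainF A B R γ Xstar with hK
  have hXK : (extendF K)ᵀ * Pmat A B Q R γ Xstar * extendF K = Xstar := by
    rw [hsq K]; simp
  have hfeas : γ • ((blockAF A B K)ᵀ * Pmat A B Q R γ Xstar * blockAF A B K) + blockLam Q R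
      = Pmat A B Q R γ Xstar := by
    rw [aux_feas, hXK]
  have hc : 0 < γ / (1 - γ) := div_pos hγ0 (by linarith)
  refine ⟨hfeas, ?_, ?_⟩
  · intro P F hP hF hPe
    rw [aux_feas] at hPe
    set X := (extendF F)ᵀ * P * extendF F with hX
    have hXs : Xᵀ = X := by
      rw [hX]; simp [hP.eq, Matrix.mul_assoc]
    set G := fromCols A B with hG
    have hPd : P - Pmat A B Q R γ Xstar = γ • (Gᵀ * (X - Xstar) * G) := by
      rw [← hPe, aux_Pmat, aux_Pmat, Matrix.mul_sub, Matrix.sub_mul, smul_sub]; abel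
    have hDe : X - Xstar = γ • ((A + B * F)ᵀ * (X - Xstar) * (A + B * F))
        + (F - K)ᵀ * (R + γ • (Bᵀ * Xstar * B)) * (F - K) := by
      have e1 : (extendF F)ᵀ * (P - Pmat A B Q R γ Xstar) * extendF F
          = X - (Xstar + (F - K)ᵀ * (R + γ • (Bᵀ * Xstar * B)) * (F - K)) := by
        rw [← hsq F, Matrix.mul_sub, Matrix.sub_mul]
      have e2 : (extendF F)ᵀ * (γ • (Gᵀ * (X - Xstar) * G)) * extendF F
          = γ • ((A + B * F)ᵀ * (X - Xstar) * (A + B * F)) := by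
        rw [← aux_GE, transpose_mul]
        simp only [Matrix.mul_smul, Matrix.smul_mul, Matrix.mul_assoc, hG]
      rw [← e2, ← hPd, e1]; abel
    have hN : ((F - K)ᵀ * (R + γ • (Bᵀ * Xstar * B)) * (F - K)).PosSemidef := by
      simpa using hH.posSemidef.conjTranspose_mul_mul_same (F - K)
    have hD : (X - Xstar).PosSemidef :=
      aux_lyap_s15 _ _ _ γ hγ0 hγ1 hF (by rw [transpose_sub, hXs, hXt]) hN hDe
    have hPD : (P - Pmat A B Q R γ Xstar).PosSemidef := by
      rw [hPd]
      refine PosSemidef.smul ?_ hγ0.le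
      simpa using hD.conjTranspose_mul_mul_same G
    have t1 := aux_trace_nonneg Γ _ hΓ.posSemidef hPD
    have t2 := aux_trace_nonneg Sw _ hSw.posSemidef hD
    rw [Matrix.mul_sub, trace_sub] at t1
    have t2' := mul_nonneg hc.le t2
    rw [aux_obj, aux_obj, hXK, ← hX]
    rw [Matrix.mul_sub, trace_sub, mul_sub] at t2'
    refine ⟨by linarith, ?_, ?_⟩
    · intro he
      have t3 : γ / (1 - γ) * (Sw * (X - Xstar)).trace = 0 := by
        rw [Matrix.mul_sub, trace_sub, mul_sub]; linarith
      have t4 := (mul_eq_zero.1 t3).resolve_left hc.ne'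
      have t5 := aux_trace_zero Sw _ hSw hD t4
      rw [t5] at hPd hDe
      refine ⟨?_, ?_⟩
      · apply sub_eq_zero.1; rw [hPd]; simp
      · apply sub_eq_zero.1
        apply aux_conj_zero _ _ hH
        rw [Matrix.mul_zero, Matrix.zero_mul, smul_zero, zero_add] at hDe
        exact hDe.symm
    · rintro ⟨h1, h2⟩
      have : X = Xstar := by rw [hX, h1, h2, hXK]
      rw [this, h1]
  · have e1 : Γ + (γ / (1 - γ)) • (extendF K * Sw * (extendF K)ᵀ)
        = Sstar - γ • (blockAF A B K * Sstar * (blockAF A B K)ᵀ) := by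
      rw [eq_sub_iff_add_eq]
      conv_rhs => rw [← hSstareq]
      abel
    have e2 : blockLam Q R = Pmat A B Q R γ Xstar
        - γ • ((blockAF A B K)ᵀ * Pmat A B Q R γ Xstar * blockAF A B K) := by
      rw [eq_sub_iff_add_eq, add_comm]; exact hfeas
    rw [e1, e2, Matrix.sub_mul, Matrix.sub_mul, trace_sub, trace_sub, trace_mul_comm Sstar]
    congr 1
    rw [Matrix.smul_mul, Matrix.smul_mul, trace_smul, trace_smul]
    congr 1
    rw [Matrix.mul_assoc, Matrix.mul_assoc, trace_mul_comm, Matrix.mul_assoc, trace_mul_comm]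
end

section
/- Assume X* ∈ ℝ^{n×n} is symmetric positive semidefinite and satisfies the discounted ARE X* = Q + γA'X*A − γ²A'X*B(R + γB'X*B)⁻¹B'X*A, and define P* := [[Q + γA'X*A, γA'X*B], [γB'X*A, R + γB'X*B]]. Then for every F ∈ ℝ^{m×n}: γ A_F' P* A_F + Λ ⪰ P*, i.e. γ A_F' P* A_F + Λ − P* is positive semidefinite. -/
open Matrix MeasureTheory Filter
open scoped ENNReal

theorem Pstar_in_dual_feasible_set (n m : ℕ) (hn : 0 < n) (hm : 0 < m)
    (A : Matrix (Fin n) (Fin n) ℝ) (B : Matrix (Fin n) (Fin m) ℝ)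
    (Q : Matrix (Fin n) (Fin n) ℝ) (R : Matrix (Fin m) (Fin m) ℝ)
    (hQ : Q.PosSemidef) (hR : R.PosDef)
    (γ : ℝ) (hγ0 : 0 < γ) (hγ1 : γ < 1)
    (Xstar : Matrix (Fin n) (Fin n) ℝ) (hXstar : Xstar.PosSemidef)
    (hARE : IsAREsol A B Q R γ Xstar) :
    ∀ F : Matrix (Fin m) (Fin n) ℝ,
      (γ • ((blockAF A B F)ᵀ * Pmat A B Q R γ Xstar * blockAF A B F)
        + blockLam Q R - Pmat A B Q R γ Xstar).PosSemidef := by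
  intro F
  have hXt : Xstarᵀ = Xstar := by
    have := hXstar.isHermitian.eq
    rwa [conjTranspose_eq_transpose_of_trivial] at this
  set S : Matrix (Fin m) (Fin m) ℝ := R + γ • (Bᵀ * Xstar * B) with hS
  have hSpd : S.PosDef := by
    have h := hXstar.conjTranspose_mul_mul_same B
    rw [conjTranspose_eq_transpose_of_trivial] at h
    exact hR.add_posSemidef (h.smul hγ0.le)
  have hSt : Sᵀ = S := by
    have := hSpd.isHermitian.eq
    rwa [conjTranspose_eq_transpose_of_trivial] at this
  have hdet : IsUnit S.det := (Matrix.isUnit_iff_isUnit_det _).mp hSpd.isUnit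
  set C : Matrix (Fin m) (Fin n) ℝ := γ • (Bᵀ * Xstar * A) with hC
  have hCt : Cᵀ = γ • (Aᵀ * Xstar * B) := by
    simp [hC, Matrix.transpose_mul, hXt, Matrix.mul_assoc]
  have hX : Q + γ • (Aᵀ * Xstar * A) = Xstar + Cᵀ * S⁻¹ * C := by
    have h : Xstar = Q + γ • (Aᵀ * Xstar * A)
      - (γ ^ 2) • (Aᵀ * Xstar * B * S⁻¹ * (Bᵀ * Xstar * A)) := hARE
    have h2 : Cᵀ * S⁻¹ * C = (γ ^ 2) • (Aᵀ * Xstar * B * S⁻¹ * (Bᵀ * Xstar * A)) := by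
      rw [hCt, hC]
      simp only [Matrix.smul_mul, Matrix.mul_smul, smul_smul, pow_two]
    rw [h2]
    exact eq_add_of_sub_eq h.symm
  have hP : Pmat A B Q R γ Xstar = fromBlocks (Xstar + Cᵀ * S⁻¹ * C) Cᵀ C S := by
    rw [← hX, hCt]; rfl
  clear_value S C
  have hG : (F + S⁻¹ * C)ᵀ * S * (F + S⁻¹ * C)
      = Fᵀ * S * F + Fᵀ * C + Cᵀ * F + Cᵀ * S⁻¹ * C := by
    have h1 : (S⁻¹)ᵀ = S⁻¹ := by rw [Matrix.transpose_nonsing_inv, hSt]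
    rw [Matrix.transpose_add, Matrix.transpose_mul, h1, Matrix.add_mul,
      Matrix.nonsing_inv_mul_cancel_right _ _ hdet, Matrix.add_mul, Matrix.mul_add, Matrix.mul_add,
      Matrix.mul_assoc Fᵀ S (S⁻¹ * C), Matrix.mul_nonsing_inv_cancel_left _ _ hdet,
      ← Matrix.mul_assoc Cᵀ]
    abel
  have hAF : blockAF A B F = fromRows (1 : Matrix (Fin n) (Fin n) ℝ) F * fromCols A B := by
    rw [fromRows_mul_fromCols]; simp [blockAF]
  have hM : (fromRows (1 : Matrix (Fin n) (Fin n) ℝ) F)ᵀ * Pmat A B Q R γ Xstar * fromRows (1 : Matrix (Fin n) (Fin n) ℝ) F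
      = Xstar + (F + S⁻¹ * C)ᵀ * S * (F + S⁻¹ * C) := by
    rw [hG, hP, transpose_fromRows, fromCols_mul_fromBlocks, fromCols_mul_fromRows]
    simp only [Matrix.transpose_one, Matrix.one_mul, Matrix.mul_one, Matrix.add_mul]
    abel
  have hL : Pmat A B Q R γ Xstar
      = blockLam Q R + γ • ((fromCols A B)ᵀ * Xstar * fromCols A B) := by
    rw [transpose_fromCols, fromRows_mul, fromRows_mul_fromCols]
    simp [Pmat, blockLam, fromBlocks_smul, fromBlocks_add]
  have key : γ • ((blockAF A B F)ᵀ * Pmat A B Q R γ Xstar * blockAF A B F)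
        + blockLam Q R - Pmat A B Q R γ Xstar
      = γ • (((F + S⁻¹ * C) * fromCols A B)ᵀ * S * ((F + S⁻¹ * C) * fromCols A B)) := by
    have h1 : (blockAF A B F)ᵀ * Pmat A B Q R γ Xstar * blockAF A B F
        = (fromCols A B)ᵀ * Xstar * fromCols A B
          + ((F + S⁻¹ * C) * fromCols A B)ᵀ * S * ((F + S⁻¹ * C) * fromCols A B) := by
      calc _ = (fromCols A B)ᵀ * ((fromRows (1 : Matrix (Fin n) (Fin n) ℝ) F)ᵀ * Pmat A B Q R γ Xstar * fromRows (1 : Matrix (Fin n) (Fin n) ℝ) F)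
            * fromCols A B := by
            rw [hAF, Matrix.transpose_mul]; simp only [Matrix.mul_assoc]
        _ = _ := by
            rw [hM, Matrix.mul_add, Matrix.add_mul, Matrix.transpose_mul]
            simp only [Matrix.mul_assoc]
    rw [h1, smul_add]
    conv_lhs => rw [hL]
    abel
  rw [key]
  have h := hSpd.posSemidef.conjTranspose_mul_mul_same ((F + S⁻¹ * C) * fromCols A B)
  rw [conjTranspose_eq_transpose_of_trivial] at h
  exact h.smul hγ0.le
end
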